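/- arXiv:2511.09472 — 2 statements merged into one kernel-verified Lean document; each statement's English description precedes it below -/
import Mathlib

section
/- Let μ be a centered Gaussian measure on ℝ^n, let 0 < δ ≤ 0.1, and let K ⊆ ℝ^n be a symmetric convex Borel set with μ(K) > 1 − δ. Then there exist δ' ∈ [0, δ] and Borel probability measures ν and ν̄ on ℝ^n such that μ = (1 − δ') ν + δ' ν̄, ν(64·K) = 1 (where 64·K = {64x : x ∈ K}), ν ⪯ μ, and ν̄ ⪯ μ ∗ μ, where μ ∗ μ denotes the convolution of μ with itself (the pushforward of μ ⊗ μ under addition). -/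
/-!
Take `δ' = δ`, let `ν` be `μ` conditioned on `64 • K`, and let `δ • ν̄` be the rest of `μ`, i.e.
`μ - c • μ.restrict (64 • K)` with `c = (1 - δ) / μ(64 • K)`.

The domination of `μ` by `ν` is exactly the Gaussian correlation inequality `gci`, proved along
Royen's lines. The two families of slabs are decorrelated by multiplying the cross-covariances by
`τ ∈ [0, 1]`, and the probability of the intersection is shown to increase in `τ`. The principal
minors of the covariance matrix decrease in `τ` (`det_interp_antitone`), and the Laplace transforms
of the squares are powers `-1/2` of determinants `det (1 + diagonal k * S_τ)`, whose expansion in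
minors has nonnegative coefficients. Indicators of slabs are approximated by monotone polynomials
in `exp (-x²/2)`, so that finitely many Laplace transforms suffice and differentiation in `τ` is
elementary; the power `-3/2` that differentiation produces is again a Laplace transform, of three
independent copies (`monotoneOn_interp`).

For the domination of `μ ∗ μ` by `ν̄`, write a symmetric convex set as `√2 • C`. As
`(x + y) / √2` has law `μ`, its `μ ∗ μ`-measure is `μ(C)`. So there is a gain from `μ(C)` to
`μ(√2 • C)` to be played against the loss from removing mass inside `64 • K`. The gain is
quantified by following `cos(jθ) x + sin(jθ) y`, whose points all have law `μ`: if this path leaves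
`C`, then it visits the shell `√2 • C \ C` (`crossing_prob`). This gives a multiplicative gain
for `μ(C)` when `C` is small (`gain_small`) and for `μ(Cᶜ)` when `C` is large (`gain_large`).
The loss is tiny because `μ((64 • K)ᶜ)` is at most `δ / 10⁶` by Fernique's argument (`tail_large`),
even relative to `μ(Cᶜ)` (`decoupling`). The bounds are combined in `remainder_bound`.
-/

open MeasureTheory ProbabilityTheory Real Pointwise

noncomputable section

/-- `stochDom μ ν` formalizes `μ ⪯ ν`: `μ(A) ≥ ν(A)` for every measurable,
convex, symmetric set `A`. -/
def stochDom {Ω : Type*} [MeasurableSpace Ω] [AddCommGroup Ω] [Module ℝ Ω]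
    (μ ν : Measure Ω) : Prop :=
  ∀ A : Set Ω, MeasurableSet A → Convex ℝ A → (∀ x ∈ A, -x ∈ A) → ν A ≤ μ A

/-- A centered (possibly degenerate) Gaussian measure on `ℝ^n`: a probability measure
under which every continuous linear functional is a centered Gaussian. -/
def IsCenteredGaussian {n : ℕ} (μ : Measure (EuclideanSpace ℝ (Fin n))) : Prop :=
  IsProbabilityMeasure μ ∧
  ∀ L : EuclideanSpace ℝ (Fin n) →L[ℝ] ℝ, ∃ v : NNReal, μ.map L = gaussianReal 0 v

/-! ### Determinants of interpolated covariance matrices -/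

open Matrix in
/-- Diagonalization: the determinant of `a I + b B` in terms of the eigenvalues of `B`. -/
lemma det_smul_one_add_smul {ι : Type*} [Fintype ι] [DecidableEq ι] {B : Matrix ι ι ℝ}
    (hB : B.IsHermitian) (a b : ℝ) :
    (a • (1 : Matrix ι ι ℝ) + b • B).det = ∏ i, (a + b * hB.eigenvalues i) := by
  have h := hB.spectral_theorem
  have h2 : a • (1 : Matrix ι ι ℝ) + b • B =
      Unitary.conjStarAlgAut ℝ _ hB.eigenvectorUnitary
        (diagonal fun i => a + b * hB.eigenvalues i) := by
    have : (diagonal fun i => a + b * hB.eigenvalues i) = a • (1 : Matrix ι ι ℝ) +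
        b • diagonal (RCLike.ofReal ∘ hB.eigenvalues) := by
      ext i j
      by_cases hij : i = j <;> simp [diagonal, hij]
    rw [this, map_add, map_smul, map_smul, map_one, ← h]
  rw [h2, Unitary.conjStarAlgAut_apply, det_mul, det_mul, mul_right_comm, ← det_mul]
  simp

open Matrix MatrixOrder in
/-- Log-concavity of the determinant at two matrices of equal determinant: after congruence by a
square root of `A` it is the weighted AM-GM inequality for the eigenvalues. -/
lemma det_le_det_segment {ι : Type*} [Fintype ι] [DecidableEq ι] {A B : Matrix ι ι ℝ}
    (hA : A.PosDef) (hB : B.PosSemidef) (hAB : A.det = B.det) {l : ℝ} (h0 : 0 ≤ l) (h1 : l ≤ 1) :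
    A.det ≤ (l • A + (1 - l) • B).det := by
  obtain ⟨C, hC, hAC⟩ : ∃ C : Matrix ι ι ℝ, IsUnit C.det ∧ A = Cᴴ * C := by
    obtain ⟨C, hC⟩ : ∃ C : Matrix ι ι ℝ, A = Cᴴ * C := by
      refine ⟨CFC.sqrt A, ?_⟩
      have h1 := CFC.sqrt_mul_sqrt_self A hA.posSemidef.nonneg
      have h2 : (CFC.sqrt A).PosSemidef := Matrix.nonneg_iff_posSemidef.1 (CFC.sqrt_nonneg A)
      rw [h2.1.eq, h1]
    refine ⟨C, ?_, hC⟩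
    have := hA.det_pos
    rw [hC, det_mul] at this
    exact isUnit_iff_ne_zero.2 (fun h => by simp [h] at this)
  have hCi : C * C⁻¹ = 1 := mul_nonsing_inv _ hC
  have hCi' : C⁻¹ * C = 1 := nonsing_inv_mul _ hC
  set B' := (C⁻¹)ᴴ * B * C⁻¹ with hB'
  have hB'p : B'.PosSemidef := hB.conjTranspose_mul_mul_same _
  have hBB : B = Cᴴ * B' * C := by
    have e : Cᴴ * (C⁻¹)ᴴ = 1 := by rw [← conjTranspose_mul, hCi']; simp
    calc B = (Cᴴ * (C⁻¹)ᴴ) * B * (C⁻¹ * C) := by rw [e, hCi']; simp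
      _ = _ := by rw [hB']; simp only [Matrix.mul_assoc]
  have key : l • A + (1 - l) • B = Cᴴ * (l • (1 : Matrix ι ι ℝ) + (1 - l) • B') * C := by
    rw [hBB, hAC]; simp [Matrix.mul_add, Matrix.add_mul]
  have hdet : B'.det = 1 := by
    have hp := hA.det_pos
    have : A.det * B'.det = A.det := by
      conv_rhs => rw [hAB, hBB]
      rw [hAC]; simp only [det_mul]; ring
    exact mul_left_cancel₀ hp.ne' (by rw [this, mul_one])
  have hprod : ∏ i, hB'p.1.eigenvalues i = 1 := by
    have := hB'p.1.det_eq_prod_eigenvalues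
    rw [hdet] at this
    simpa using this.symm
  have hge : 1 ≤ (l • (1 : Matrix ι ι ℝ) + (1 - l) • B').det := by
    rw [det_smul_one_add_smul hB'p.1]
    calc (1 : ℝ) = ∏ i, ((1 : ℝ) ^ l * (hB'p.1.eigenvalues i) ^ (1 - l)) := by
          rw [Finset.prod_mul_distrib, Real.finsetProd_rpow _ _ (fun i _ => hB'p.eigenvalues_nonneg i),
            hprod]; simp
      _ ≤ _ := by
          refine Finset.prod_le_prod (fun i _ => mul_nonneg (by simp)
            (Real.rpow_nonneg (hB'p.eigenvalues_nonneg i) _)) fun i _ => ?_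
          have := Real.geom_mean_le_arith_mean2_weighted h0 (by linarith : 0 ≤ 1 - l)
            zero_le_one (hB'p.eigenvalues_nonneg i) (by ring)
          simpa using this
  rw [key, det_mul, det_mul]
  have e : A.det = Cᴴ.det * C.det := by rw [hAC, det_mul]
  calc A.det = A.det * 1 := by ring
    _ ≤ A.det * _ := mul_le_mul_of_nonneg_left hge hA.det_pos.le
    _ = _ := by rw [e]; ring

/-- The covariance matrix in which the entries between the two blocks `σ = true` and
`σ = false` of `S` are multiplied by `τ`. At `τ = 1` it is `S`; at `τ = 0` the two blocks are
independent. -/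
def interp {ι : Type*} (S : Matrix ι ι ℝ) (σ : ι → Bool) (τ : ℝ) : Matrix ι ι ℝ :=
  Matrix.of fun i j => if σ i = σ j then S i j else τ * S i j

section
variable {ι : Type*} (S : Matrix ι ι ℝ) (σ : ι → Bool)

/-- The diagonal sign matrix of `σ`; conjugating by it flips the sign of `τ` in `interp`. -/
def signMat [DecidableEq ι] : Matrix ι ι ℝ := Matrix.diagonal fun i => if σ i then 1 else -1

open Matrix

lemma interp_one : interp S σ 1 = S := by ext i j; simp [interp]

lemma interp_submatrix {κ : Type*} (f : κ → ι) (τ : ℝ) :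
    (interp S σ τ).submatrix f f = interp (S.submatrix f f) (σ ∘ f) τ := by
  ext i j; simp [interp]

/-- `interp` is affine in `τ`: every `τ`-value in `[-τ₀, τ₀]` is a mixture of the two endpoints. -/
lemma interp_comb (l τ : ℝ) :
    interp S σ ((2 * l - 1) * τ) = l • interp S σ τ + (1 - l) • interp S σ (-τ) := by
  ext i j; simp [interp]; split_ifs <;> ring

variable [Fintype ι] [DecidableEq ι]

lemma signMat_conj (M : Matrix ι ι ℝ) (i j : ι) :
    (signMat σ * M * signMat σ) i j = if σ i = σ j then M i j else - M i j := by
  rw [signMat, mul_diagonal, diagonal_mul]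
  cases σ i <;> cases σ j <;> simp

lemma interp_neg (τ : ℝ) : interp S σ (-τ) = signMat σ * interp S σ τ * signMat σ := by
  ext i j; rw [signMat_conj]; simp [interp]; split_ifs <;> simp

lemma det_interp_neg (τ : ℝ) : (interp S σ (-τ)).det = (interp S σ τ).det := by
  have : (signMat σ).det * (signMat σ).det = 1 := by
    rw [signMat, det_diagonal, ← Finset.prod_mul_distrib]
    exact Finset.prod_eq_one fun i _ => by split_ifs <;> simp
  rw [interp_neg, det_mul, det_mul, mul_right_comm, this, one_mul]

variable {S}

lemma interp_posSemidef (hS : S.PosSemidef) {τ : ℝ} (h0 : 0 ≤ τ) (h1 : τ ≤ 1) :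
    (interp S σ τ).PosSemidef := by
  have h := interp_comb S σ ((1 + τ) / 2) 1
  rw [interp_neg, interp_one] at h
  have e : (2 * ((1 + τ) / 2) - 1) * 1 = τ := by ring
  rw [e] at h
  rw [h]
  have hs : (signMat σ)ᴴ = signMat σ := by simp [signMat]
  refine (hS.smul (by linarith)).add (PosSemidef.smul ?_ (by linarith))
  have := hS.conjTranspose_mul_mul_same (signMat σ)
  rwa [hs] at this

/-- The determinant is even in `τ` and, along the segment from `interp S σ (-s)` to
`interp S σ s`, at least its common endpoint value; hence it decreases on `[0, 1]`. -/
lemma det_interp_antitone (hS : S.PosSemidef) :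
    AntitoneOn (fun τ => (interp S σ τ).det) (Set.Icc 0 1) := by
  intro t ht s hs hts
  have hps := interp_posSemidef σ hS hs.1 hs.2
  have hpt := interp_posSemidef σ hS ht.1 ht.2
  show (interp S σ s).det ≤ (interp S σ t).det
  by_cases hd : (interp S σ s).det = 0
  · rw [hd]; exact hpt.det_nonneg
  have hpd : (interp S σ s).PosDef := hps.posDef_iff_isUnit.2
    ((isUnit_iff_isUnit_det _).2 (isUnit_iff_ne_zero.2 hd))
  have hneg : (interp S σ (-s)).PosSemidef := by
    rw [interp_neg]
    have hs : (signMat σ)ᴴ = signMat σ := by simp [signMat]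
    have := hps.conjTranspose_mul_mul_same (signMat σ)
    rwa [hs] at this
  rcases eq_or_lt_of_le hs.1 with h | h
  · have : t = s := by linarith [ht.1]
    rw [this]
  have hc := interp_comb S σ ((1 + t / s) / 2) s
  have e : (2 * ((1 + t / s) / 2) - 1) * s = t := by field_simp; ring
  rw [e] at hc
  rw [hc]
  have : t / s ≤ 1 := (div_le_one h).2 hts
  have : 0 ≤ t / s := div_nonneg ht.1 h.le
  exact det_le_det_segment hpd hneg (det_interp_neg S σ s).symm (by linarith) (by linarith)

end

/-! ### Laplace transforms of squares of Gaussian vectors -/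

lemma integral_exp_gaussianReal {v : ℝ} (hv : 0 ≤ v) :
    ∫ x, rexp (-(1 / 2) * (v * x ^ 2)) ∂(gaussianReal 0 1) = (1 + v) ^ (-(1 / 2) : ℝ) := by
  rw [integral_gaussianReal_eq_integral_smul (by simp)]
  have : ∀ x : ℝ, gaussianPDFReal 0 1 x • rexp (-(1 / 2) * (v * x ^ 2)) =
      (√(2 * π))⁻¹ * rexp (-((1 + v) / 2) * x ^ 2) := by
    intro x
    rw [gaussianPDFReal, smul_eq_mul, mul_assoc, ← Real.exp_add]
    simp only [NNReal.coe_one, mul_one, sub_zero]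
    congr 2; ring
  simp_rw [this]
  rw [integral_const_mul, integral_gaussian]
  have h1 : 0 < 1 + v := by linarith
  rw [Real.rpow_neg h1.le, ← Real.sqrt_eq_rpow, ← Real.sqrt_inv, ← Real.sqrt_inv,
    ← Real.sqrt_mul (by positivity)]
  congr 1
  field_simp

open Matrix WithLp in
lemma integral_exp_stdGaussian {ι : Type*} [Fintype ι] [DecidableEq ι] {T : Matrix ι ι ℝ}
    (hT : T.PosSemidef) :
    ∫ g, rexp (-(1 / 2) * (ofLp g ⬝ᵥ T *ᵥ ofLp g)) ∂(stdGaussian (EuclideanSpace ℝ ι)) =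
      (1 + T).det ^ (-(1 / 2) : ℝ) := by
  have hq : ∀ x : ι → ℝ, (ofLp (∑ i, x i • hT.1.eigenvectorBasis i) ⬝ᵥ
      T *ᵥ ofLp (∑ i, x i • hT.1.eigenvectorBasis i)) = ∑ i, hT.1.eigenvalues i * x i ^ 2 := by
    intro x
    have h1 : T *ᵥ ofLp (∑ i, x i • hT.1.eigenvectorBasis i) =
        ofLp (∑ i, (hT.1.eigenvalues i * x i) • hT.1.eigenvectorBasis i) := by
      simp only [ofLp_sum, ofLp_smul, mulVec_sum, mulVec_smul, hT.1.mulVec_eigenvectorBasis]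
      refine Finset.sum_congr rfl fun i _ => ?_
      rw [smul_smul, mul_comm]
    rw [h1]
    have h2 : ∀ u w : EuclideanSpace ℝ ι, ofLp u ⬝ᵥ ofLp w = inner ℝ u w := by
      intro u w; simp [PiLp.inner_apply, dotProduct, mul_comm]
    rw [h2]
    rw [hT.1.eigenvectorBasis.orthonormal.inner_sum]
    refine Finset.sum_congr rfl fun i _ => ?_
    simp; ring
  have hdet := det_smul_one_add_smul hT.1 1 1
  simp only [one_smul, one_mul] at hdet
  rw [stdGaussian_eq_map_pi_orthonormalBasis hT.1.eigenvectorBasis,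
    integral_map (Measurable.aemeasurable (by fun_prop))
      (Continuous.aestronglyMeasurable (by
        refine Real.continuous_exp.comp (continuous_const.mul ?_)
        have : Continuous fun g : EuclideanSpace ℝ ι => ofLp g := PiLp.continuous_ofLp 2 _
        exact Continuous.dotProduct this (Continuous.matrix_mulVec continuous_const this)))]
  simp_rw [hq, Finset.mul_sum, Real.exp_sum]
  rw [integral_fintype_prod_eq_prod (fun i (x : ℝ) => rexp (-(1 / 2) * (hT.1.eigenvalues i * x ^ 2)))]
  rw [hdet, ← Real.finsetProd_rpow _ _ (fun i _ => by linarith [hT.eigenvalues_nonneg i])]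
  exact Finset.prod_congr rfl fun i _ => integral_exp_gaussianReal (hT.eigenvalues_nonneg i)

open Matrix WithLp MatrixOrder in
/-- Sylvester's determinant identity symmetrizes `diagonal l * S`; it yields positivity of
`det (1 + diagonal l * S)`. -/
lemma det_one_add_diagonal_mul {ι : Type*} [Fintype ι] [DecidableEq ι] {S : Matrix ι ι ℝ}
    (hS : S.PosSemidef) {l : ι → ℝ} (hl : ∀ i, 0 ≤ l i) :
    (CFC.sqrt S * diagonal l * CFC.sqrt S).PosSemidef ∧
    (1 + diagonal l * S).det = (1 + CFC.sqrt S * diagonal l * CFC.sqrt S).det ∧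
    0 < (1 + diagonal l * S).det := by
  have h1 := CFC.sqrt_mul_sqrt_self S hS.nonneg
  have h2 : (CFC.sqrt S).PosSemidef := Matrix.nonneg_iff_posSemidef.1 (CFC.sqrt_nonneg S)
  have h3 : (CFC.sqrt S * diagonal l * CFC.sqrt S).PosSemidef := by
    have := (PosSemidef.diagonal (fun i => hl i) : (diagonal l).PosSemidef).conjTranspose_mul_mul_same
      (CFC.sqrt S)
    rwa [h2.1.eq] at this
  have h4 : (1 + diagonal l * S).det = (1 + CFC.sqrt S * diagonal l * CFC.sqrt S).det := by
    conv_lhs => rw [← h1, ← Matrix.mul_assoc]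
    rw [Matrix.det_one_add_mul_comm, Matrix.mul_assoc]
  refine ⟨h3, h4, ?_⟩
  rw [h4]
  exact (PosDef.one.add_posSemidef h3).det_pos

open Matrix WithLp MatrixOrder in
/-- Laplace transform of the vector of squares `(Xᵢ²)` of a centered Gaussian vector. -/
lemma integral_exp_multivariateGaussian {ι : Type*} [Fintype ι] [DecidableEq ι] {S : Matrix ι ι ℝ}
    (hS : S.PosSemidef) {l : ι → ℝ} (hl : ∀ i, 0 ≤ l i) :
    ∫ x, rexp (-(1 / 2) * ∑ i, l i * x i ^ 2) ∂(multivariateGaussian 0 S) =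
      (1 + diagonal l * S).det ^ (-(1 / 2) : ℝ) := by
  obtain ⟨h3, h4, h5⟩ := det_one_add_diagonal_mul hS hl
  rw [h4, ← integral_exp_stdGaussian h3, multivariateGaussian,
    integral_map (Measurable.aemeasurable (by fun_prop))
      (Continuous.aestronglyMeasurable (by fun_prop))]
  refine integral_congr_ae (.of_forall fun g => ?_)
  have h2 : (CFC.sqrt S).PosSemidef := Matrix.nonneg_iff_posSemidef.1 (CFC.sqrt_nonneg S)
  have h2t : (CFC.sqrt S)ᵀ = CFC.sqrt S := by simpa using h2.1.eq
  simp only [zero_add]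
  congr 2
  rw [← mulVec_mulVec, ← mulVec_mulVec, dotProduct_mulVec, ← mulVec_transpose, h2t]
  simp only [dotProduct, ofLp_toEuclideanCLM, mulVec_diagonal]
  refine Finset.sum_congr rfl fun i _ => ?_
  ring

/-- The law of three independent copies of a centered Gaussian vector of covariance `S`. -/
def tripleGaussian {ι : Type*} [Fintype ι] [DecidableEq ι] (S : Matrix ι ι ℝ) :
    Measure (EuclideanSpace ℝ ι × EuclideanSpace ℝ ι × EuclideanSpace ℝ ι) :=
  (multivariateGaussian 0 S).prod ((multivariateGaussian 0 S).prod (multivariateGaussian 0 S))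

instance {ι : Type*} [Fintype ι] [DecidableEq ι] (S : Matrix ι ι ℝ) :
    IsProbabilityMeasure (tripleGaussian S) := by unfold tripleGaussian; infer_instance

open Matrix in
/-- Laplace transform of the sum of the squares of three independent copies. The exponent
`-3/2` is the one produced by differentiating the power `-1/2` of the same determinant. -/
lemma integral_exp_tripleGaussian {ι : Type*} [Fintype ι] [DecidableEq ι] {S : Matrix ι ι ℝ}
    (hS : S.PosSemidef) {l : ι → ℝ} (hl : ∀ i, 0 ≤ l i) :
    ∫ x, rexp (-(1 / 2) * ∑ i, l i * (x.1 i ^ 2 + (x.2.1 i ^ 2 + x.2.2 i ^ 2))) ∂(tripleGaussian S) =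
      (1 + diagonal l * S).det ^ (-(3 / 2) : ℝ) := by
  obtain ⟨h3, h4, h5⟩ := det_one_add_diagonal_mul hS hl
  simp_rw [mul_add, Finset.sum_add_distrib, mul_add, Real.exp_add]
  rw [tripleGaussian]
  rw [integral_prod_mul (fun x : EuclideanSpace ℝ ι => rexp (-(1 / 2) * ∑ i, l i * x i ^ 2))
    (fun x : EuclideanSpace ℝ ι × EuclideanSpace ℝ ι => rexp (-(1 / 2) * ∑ i, l i * x.1 i ^ 2) *
      rexp (-(1 / 2) * ∑ i, l i * x.2 i ^ 2)),
    integral_prod_mul (fun x : EuclideanSpace ℝ ι => rexp (-(1 / 2) * ∑ i, l i * x i ^ 2))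
      (fun x : EuclideanSpace ℝ ι => rexp (-(1 / 2) * ∑ i, l i * x i ^ 2)),
    integral_exp_multivariateGaussian hS hl, ← Real.rpow_add h5, ← Real.rpow_add h5]
  norm_num

/-! ### Monotonicity along the interpolation -/

open Matrix in
/-- Expansion of `det (1 + diagonal l * M)` in principal minors of `M`. -/
lemma det_one_add_diagonal_mul_eq_sum {ι : Type*} [Fintype ι] [DecidableEq ι] (M : Matrix ι ι ℝ)
    (l : ι → ℝ) : (1 + diagonal l * M).det =
      ∑ J : Finset ι, (∏ i ∈ J, l i) * (M.submatrix (fun i : J => i.1) (fun i : J => i.1)).det := by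
  let D := (detRowAlternating : (ι → ℝ) [⋀^ι]→ₗ[ℝ] ℝ)
  have e0 : (1 + diagonal l * M).det = D (fun i => (l i • M i) + (1 : Matrix ι ι ℝ) i) := by
    change D _ = D _
    congr 1
    ext i j
    simp [diagonal_mul, add_comm]
  rw [e0, show (fun i => (l i • M i) + (1 : Matrix ι ι ℝ) i) = (fun i => l i • M i) +
    (fun i => (1 : Matrix ι ι ℝ) i) from rfl, D.map_add_univ]
  refine Finset.sum_congr rfl fun J _ => ?_
  rw [← det_piecewise_one_eq_submatrix_det]
  have : J.piecewise (fun i => l i • M i) (fun i => (1 : Matrix ι ι ℝ) i) =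
      fun i => (J.piecewise l 1 i) • (J.piecewise M.row (1 : Matrix ι ι ℝ).row) i := by
    ext i j
    by_cases h : i ∈ J <;> simp [h, Matrix.row, Finset.piecewise]
  rw [this, D.map_smul_univ, Finset.prod_piecewise]
  simp [smul_eq_mul, D]
  left; rfl

section
variable {ι : Type*} [DecidableEq ι] (S : Matrix ι ι ℝ) (σ : ι → Bool)

/-- The principal minor of `interp S σ τ` with index set `J`. -/
def minor (J : Finset ι) (τ : ℝ) : ℝ :=
  ((interp S σ τ).submatrix (fun i : J => i.1) (fun i : J => i.1)).det

lemma differentiable_minor (J : Finset ι) : Differentiable ℝ (minor S σ J) := by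
  have : ∀ i j : ι, Differentiable ℝ fun τ => interp S σ τ i j := by
    intro i j
    simp only [interp, Matrix.of_apply]
    split_ifs <;> fun_prop
  unfold minor
  simp only [Matrix.det_apply, Matrix.submatrix_apply]
  fun_prop

variable {S}
/-- A principal submatrix of `interp S σ τ` is again an interpolated covariance, so each
principal minor decreases in `τ`. -/
lemma deriv_minor_nonpos (hS : S.PosSemidef) (J : Finset ι) {τ : ℝ} (hτ : τ ∈ Set.Ioo (0 : ℝ) 1) :
    deriv (minor S σ J) τ ≤ 0 := by
  have ha : AntitoneOn (minor S σ J) (Set.Icc 0 1) := by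
    unfold minor
    simp_rw [interp_submatrix]
    exact det_interp_antitone _ (hS.submatrix _)
  rw [← derivWithin_of_mem_nhds (Icc_mem_nhds hτ.1 hτ.2)]
  exact ha.derivWithin_nonpos

end

open Polynomial in
/-- Expansion of the expectation of `∏ qᵢ(yᵢ)` into joint moments of the bounded variables `yᵢ`. -/
lemma integral_prod_eval {ι Ω : Type*} [Fintype ι] [DecidableEq ι] [MeasurableSpace Ω]
    (P : Measure Ω) [IsProbabilityMeasure P] {y : ι → Ω → ℝ} (hy : ∀ i, Measurable (y i))
    (h0 : ∀ i x, 0 ≤ y i x) (h1 : ∀ i x, y i x ≤ 1) (q : ι → ℝ[X]) (N : ℕ)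
    (hN : ∀ i, (q i).natDegree < N) :
    ∫ x, ∏ i, (q i).eval (y i x) ∂P = ∑ k ∈ Fintype.piFinset (fun _ : ι => Finset.range N),
      (∏ i, (q i).coeff (k i)) * ∫ x, ∏ i, y i x ^ k i ∂P := by
  have : ∀ x, ∏ i, (q i).eval (y i x) = ∑ k ∈ Fintype.piFinset (fun _ : ι => Finset.range N),
      (∏ i, (q i).coeff (k i)) * ∏ i, y i x ^ k i := by
    intro x
    rw [Finset.prod_congr rfl fun i _ => Polynomial.eval_eq_sum_range' (hN i) (y i x),
      Finset.prod_univ_sum]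
    simp_rw [Finset.prod_mul_distrib]
  simp_rw [this]
  rw [integral_finsetSum]
  · simp_rw [integral_const_mul]
  · intro k _
    refine Integrable.const_mul ?_ _
    refine Integrable.of_bound (C := 1) (Measurable.aestronglyMeasurable (by fun_prop)) ?_
    refine .of_forall fun x => ?_
    rw [Real.norm_of_nonneg (Finset.prod_nonneg fun i _ => pow_nonneg (h0 i x) _)]
    exact Finset.prod_le_one (fun i _ => pow_nonneg (h0 i x) _)
      fun i _ => pow_le_one₀ (h0 i x) (h1 i x)

open Polynomial in
lemma coeff_X_mul_derivative (p : ℝ[X]) (k : ℕ) :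
    (X * derivative p).coeff k = k * p.coeff k := by
  cases k with
  | zero => simp
  | succ k => rw [coeff_X_mul, coeff_derivative]; push_cast; ring

lemma exp_sq_eq {ι : Type*} [Fintype ι] (k : ι → ℕ) (u : ι → ℝ) :
    ∏ i, rexp (-(1 / 2) * u i) ^ k i = rexp (-(1 / 2) * ∑ i, (k i : ℝ) * u i) := by
  rw [Finset.mul_sum, Real.exp_sum]
  refine Finset.prod_congr rfl fun i _ => ?_
  rw [← Real.exp_nat_mul]; congr 1; ring

open Polynomial in
/-- Monotonicity of `E ∏ p(exp(-Xᵢ²/2))` along the interpolation, for a polynomial `p` that is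
nonnegative and nondecreasing on `[0, 1]`. Expanding in monomials turns the expectation into a
combination of `det(1 + diagonal k * S_τ) ^ (-1/2)`. Its derivative in `τ` is a sum over `J` of
`-1/2` times the derivative of the `J`-th minor, times a combination of
`det(1 + diagonal k * S_τ) ^ (-3/2)`; the latter is recognized as the expectation of a nonnegative
function of three independent copies. -/
lemma monotoneOn_interp {ι : Type*} [Fintype ι] [DecidableEq ι] {S : Matrix ι ι ℝ}
    (hS : S.PosSemidef) (σ : ι → Bool) (p : ℝ[X]) (hp : ∀ y ∈ Set.Icc (0 : ℝ) 1, 0 ≤ p.eval y)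
    (hp' : ∀ y ∈ Set.Icc (0 : ℝ) 1, 0 ≤ (derivative p).eval y) :
    MonotoneOn (fun τ => ∫ x, ∏ i, p.eval (rexp (-(1 / 2) * x i ^ 2))
      ∂(multivariateGaussian 0 (interp S σ τ))) (Set.Icc 0 1) := by
  set N := p.natDegree + 1 with hN
  set D : (ι → ℕ) → ℝ → ℝ := fun k τ => ∑ J : Finset ι, (∏ i ∈ J, (k i : ℝ)) * minor S σ J τ with hD
  have hDdet : ∀ k τ, D k τ = (1 + Matrix.diagonal (fun i => (k i : ℝ)) * interp S σ τ).det := by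
    intro k τ; rw [det_one_add_diagonal_mul_eq_sum]; rfl
  have hDpos : ∀ k, ∀ τ ∈ Set.Icc (0 : ℝ) 1, 0 < D k τ := by
    intro k τ hτ
    rw [hDdet]
    exact (det_one_add_diagonal_mul (interp_posSemidef σ hS hτ.1 hτ.2) fun i => by positivity).2.2
  set K := Fintype.piFinset (fun _ : ι => Finset.range N)
  set G : ℝ → ℝ := fun τ => ∑ k ∈ K, (∏ i, p.coeff (k i)) * (D k τ) ^ (-(1 / 2) : ℝ) with hG
  have hΦ : Set.EqOn (fun τ => ∫ x, ∏ i, p.eval (rexp (-(1 / 2) * x i ^ 2))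
      ∂(multivariateGaussian 0 (interp S σ τ))) G (Set.Icc 0 1) := by
    intro τ hτ
    show ∫ x, ∏ i, p.eval (rexp (-(1 / 2) * x i ^ 2))
      ∂(multivariateGaussian 0 (interp S σ τ)) = G τ
    rw [integral_prod_eval (y := fun i (x : EuclideanSpace ℝ ι) => rexp (-(1 / 2) * x i ^ 2)) _
      (fun i => by fun_prop) (fun i x => (Real.exp_pos _).le)
      (fun i x => Real.exp_le_one_iff.2 (by nlinarith [sq_nonneg (x i)])) (fun _ => p) N
      (fun i => Nat.lt_succ_self _)]
    refine Finset.sum_congr rfl fun k _ => ?_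
    simp_rw [exp_sq_eq k]
    rw [integral_exp_multivariateGaussian (interp_posSemidef σ hS hτ.1 hτ.2)
      (fun i => by positivity), hDdet]
  have hDderiv : ∀ k τ, HasDerivAt (D k)
      (∑ J : Finset ι, (∏ i ∈ J, (k i : ℝ)) * deriv (minor S σ J) τ) τ := by
    intro k τ
    exact HasDerivAt.fun_sum fun J _ => ((differentiable_minor S σ J τ).hasDerivAt).const_mul _
  have hGderiv : ∀ τ ∈ Set.Icc (0 : ℝ) 1, HasDerivAt G (∑ k ∈ K, (∏ i, p.coeff (k i)) *
      ((∑ J : Finset ι, (∏ i ∈ J, (k i : ℝ)) * deriv (minor S σ J) τ) * (-(1 / 2)) *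
        (D k τ) ^ (-(3 / 2) : ℝ))) τ := by
    intro τ hτ
    refine HasDerivAt.fun_sum fun k _ => HasDerivAt.const_mul _ ?_
    have := (hDderiv k τ).rpow_const (p := -(1 / 2)) (Or.inl (hDpos k τ hτ).ne')
    rwa [show (-(1 / 2) - 1 : ℝ) = -(3 / 2) by norm_num] at this
  refine MonotoneOn.congr ?_ hΦ.symm
  refine monotoneOn_of_deriv_nonneg (convex_Icc 0 1)
    (fun τ hτ => (hGderiv τ hτ).continuousAt.continuousWithinAt)
    (fun τ hτ => (hGderiv τ (interior_subset hτ)).differentiableAt.differentiableWithinAt) ?_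
  intro τ hτ
  rw [interior_Icc] at hτ
  have hτ' := Set.Ioo_subset_Icc_self hτ
  rw [(hGderiv τ hτ').deriv]
  -- `∏_{i ∈ J} kᵢ` times the coefficients of `p` are the coefficients of `X * p'`
  have hval : ∀ J : Finset ι, ∑ k ∈ K, (∏ i, p.coeff (k i)) * (∏ i ∈ J, (k i : ℝ)) *
      (D k τ) ^ (-(3 / 2) : ℝ) =
      ∫ x, ∏ i, (if i ∈ J then X * derivative p else p).eval
        (rexp (-(1 / 2) * (x.1 i ^ 2 + (x.2.1 i ^ 2 + x.2.2 i ^ 2))))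
        ∂(tripleGaussian (interp S σ τ)) := by
    intro J
    rw [integral_prod_eval (y := fun i (x : EuclideanSpace ℝ ι × EuclideanSpace ℝ ι ×
      EuclideanSpace ℝ ι) => rexp (-(1 / 2) * (x.1 i ^ 2 + (x.2.1 i ^ 2 + x.2.2 i ^ 2)))) _
      (fun i => by fun_prop) (fun i x => (Real.exp_pos _).le)
      (fun i x => Real.exp_le_one_iff.2 (by
        nlinarith [sq_nonneg (x.1 i), sq_nonneg (x.2.1 i), sq_nonneg (x.2.2 i)]))
      (fun i => if i ∈ J then X * derivative p else p) N ?_]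
    · refine Finset.sum_congr rfl fun k _ => ?_
      simp_rw [exp_sq_eq k]
      rw [integral_exp_tripleGaussian (interp_posSemidef σ hS hτ'.1 hτ'.2)
        (fun i => by positivity), hDdet]
      congr 1
      have : ∏ i ∈ J, (k i : ℝ) = ∏ i, if i ∈ J then (k i : ℝ) else 1 := by
        simp [Finset.prod_ite_mem]
      rw [this, ← Finset.prod_mul_distrib]
      refine Finset.prod_congr rfl fun i _ => ?_
      split_ifs
      · rw [coeff_X_mul_derivative]; ring
      · ring
    · intro i
      split_ifs
      · refine Nat.lt_succ_of_le ?_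
        rw [natDegree_le_iff_coeff_eq_zero]
        intro n hn
        rw [coeff_X_mul_derivative, coeff_eq_zero_of_natDegree_lt hn, mul_zero]
      · exact Nat.lt_succ_self _
  have hsum : (∑ k ∈ K, (∏ i, p.coeff (k i)) *
      ((∑ J : Finset ι, (∏ i ∈ J, (k i : ℝ)) * deriv (minor S σ J) τ) * (-(1 / 2)) *
        (D k τ) ^ (-(3 / 2) : ℝ))) = ∑ J : Finset ι, (-(1 / 2) * deriv (minor S σ J) τ) *
      ∑ k ∈ K, (∏ i, p.coeff (k i)) * (∏ i ∈ J, (k i : ℝ)) * (D k τ) ^ (-(3 / 2) : ℝ) := by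
    simp_rw [Finset.mul_sum, Finset.sum_mul, Finset.mul_sum]
    rw [Finset.sum_comm]
    refine Finset.sum_congr rfl fun J _ => Finset.sum_congr rfl fun k _ => ?_
    ring
  rw [hsum]
  refine Finset.sum_nonneg fun J _ => mul_nonneg ?_ ?_
  · have := deriv_minor_nonpos σ hS J hτ
    linarith
  · rw [hval]
    refine integral_nonneg fun x => Finset.prod_nonneg fun i _ => ?_
    have hm : rexp (-(1 / 2) * (x.1 i ^ 2 + (x.2.1 i ^ 2 + x.2.2 i ^ 2))) ∈ Set.Icc (0 : ℝ) 1 :=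
      ⟨(Real.exp_pos _).le, Real.exp_le_one_iff.2 (by
        nlinarith [sq_nonneg (x.1 i), sq_nonneg (x.2.1 i), sq_nonneg (x.2.2 i)])⟩
    split_ifs
    · rw [eval_mul, eval_X]; exact mul_nonneg hm.1 (hp' _ hm)
    · exact hp _ hm

/-! ### Correlation of coordinate slabs -/

open Matrix WithLp in
/-- At `τ = 0` the two blocks can be taken from two independent vectors of covariance `S`. -/
lemma multivariateGaussian_interp_zero {ι : Type*} [Fintype ι] [DecidableEq ι] {S : Matrix ι ι ℝ}
    (hS : S.PosSemidef) (σ : ι → Bool) :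
    multivariateGaussian 0 (interp S σ 0) =
      ((multivariateGaussian 0 S).prod (multivariateGaussian 0 S)).map
        (fun q => toLp 2 fun i => if σ i then q.1 i else q.2 i) := by
  have hm : Measurable fun q : EuclideanSpace ℝ ι × EuclideanSpace ℝ ι =>
      toLp 2 fun i => if σ i then q.1 i else q.2 i := by
    refine (PiLp.continuous_toLp 2 _).measurable.comp (measurable_pi_lambda _ fun i => ?_)
    split_ifs <;> fun_prop
  have : IsProbabilityMeasure (((multivariateGaussian 0 S).prod (multivariateGaussian 0 S)).map
        (fun q => toLp 2 fun i => if σ i then q.1 i else q.2 i)) :=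
    Measure.isProbabilityMeasure_map hm.aemeasurable
  apply Measure.ext_of_charFun
  ext t
  have hS0 : (interp S σ 0).PosSemidef := interp_posSemidef σ hS le_rfl zero_le_one
  rw [charFun_multivariateGaussian hS0, charFun_apply, integral_map hm.aemeasurable
    (Continuous.aestronglyMeasurable (by fun_prop))]
  set t1 : EuclideanSpace ℝ ι := toLp 2 fun i => if σ i then t i else 0 with ht1
  set t2 : EuclideanSpace ℝ ι := toLp 2 fun i => if σ i then 0 else t i with ht2
  have h1 : ∀ q : EuclideanSpace ℝ ι × EuclideanSpace ℝ ι,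
      inner ℝ (toLp 2 fun i => if σ i then q.1 i else q.2 i) t = inner ℝ q.1 t1 + inner ℝ q.2 t2 := by
    intro q
    simp only [PiLp.inner_apply, ht1, ht2, ← Finset.sum_add_distrib]
    refine Finset.sum_congr rfl fun i _ => ?_
    split_ifs <;> simp
  simp_rw [h1, Complex.ofReal_add, add_mul, Complex.exp_add]
  rw [integral_prod_mul (fun x => Complex.exp ((inner ℝ x t1 : ℝ) * Complex.I))
    (fun x => Complex.exp ((inner ℝ x t2 : ℝ) * Complex.I)), ← charFun_apply, ← charFun_apply,
    charFun_multivariateGaussian hS, charFun_multivariateGaussian hS, ← Complex.exp_add]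
  congr 1
  have h2 : ofLp t ⬝ᵥ interp S σ 0 *ᵥ ofLp t = ofLp t1 ⬝ᵥ S *ᵥ ofLp t1 + ofLp t2 ⬝ᵥ S *ᵥ ofLp t2 := by
    simp only [dotProduct, mulVec, ← Finset.sum_add_distrib, Finset.mul_sum]
    refine Finset.sum_congr rfl fun i _ => Finset.sum_congr rfl fun j _ => ?_
    simp only [interp, of_apply, ht1, ht2]
    cases σ i <;> cases σ j <;> simp
  rw [h2]
  simp
  ring

open Matrix WithLp in
lemma integral_prod_interp_zero {ι : Type*} [Fintype ι] [DecidableEq ι] {S : Matrix ι ι ℝ}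
    (hS : S.PosSemidef) (σ : ι → Bool) {f : ℝ → ℝ} (hf : Measurable f) :
    ∫ x, ∏ i, f (x i) ∂(multivariateGaussian 0 (interp S σ 0)) =
      (∫ x, ∏ i with σ i, f (x i) ∂(multivariateGaussian 0 S)) *
      ∫ x, ∏ i with ¬ σ i, f (x i) ∂(multivariateGaussian 0 S) := by
  have hm : Measurable fun q : EuclideanSpace ℝ ι × EuclideanSpace ℝ ι =>
      toLp 2 fun i => if σ i then q.1 i else q.2 i := by
    refine (PiLp.continuous_toLp 2 _).measurable.comp (measurable_pi_lambda _ fun i => ?_)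
    split_ifs <;> fun_prop
  rw [multivariateGaussian_interp_zero hS, integral_map hm.aemeasurable
    (Measurable.aestronglyMeasurable (by fun_prop)), ← integral_prod_mul]
  refine integral_congr_ae (.of_forall fun q => ?_)
  show ∏ i, f (if σ i then q.1 i else q.2 i) = _
  rw [← Finset.prod_filter_mul_prod_filter_not Finset.univ (fun i => σ i)]
  congr 1
  · exact Finset.prod_congr rfl fun i hi => by simp [(Finset.mem_filter.1 hi).2]
  · exact Finset.prod_congr rfl fun i hi => by simp [(Finset.mem_filter.1 hi).2]

/-- The exponent of the threshold polynomial, of order `m * exp m`: it makes `thresh m` jump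
at `exp (-1)` as `m → ∞`. -/
def threshExp (m : ℕ) : ℕ := ⌈m * rexp m⌉₊

open Polynomial in
/-- The polynomial `1 - (1 - yᵐ)ᴹ` with `M = threshExp m`. It is nondecreasing on `[0, 1]`
with values in `[0, 1]`, and tends to the indicator of `[exp (-1), 1]` as `m → ∞`. -/
def thresh (m : ℕ) : ℝ[X] := 1 - (1 - X ^ m) ^ threshExp m

open Polynomial in
lemma thresh_eval (m : ℕ) (y : ℝ) : (thresh m).eval y = 1 - (1 - y ^ m) ^ threshExp m := by
  simp [thresh]

lemma thresh_mem (m : ℕ) {y : ℝ} (hy : y ∈ Set.Icc (0 : ℝ) 1) :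
    (thresh m).eval y ∈ Set.Icc (0 : ℝ) 1 := by
  rw [thresh_eval]
  have h1 : y ^ m ≤ 1 := pow_le_one₀ hy.1 hy.2
  have h0 : 0 ≤ y ^ m := pow_nonneg hy.1 _
  have h2 : (1 - y ^ m) ^ threshExp m ≤ 1 := pow_le_one₀ (by linarith) (by linarith)
  have h3 : 0 ≤ (1 - y ^ m) ^ threshExp m := pow_nonneg (by linarith) _
  constructor <;> linarith

open Polynomial in
lemma thresh_deriv (m : ℕ) {y : ℝ} (hy : y ∈ Set.Icc (0 : ℝ) 1) :
    0 ≤ (derivative (thresh m)).eval y := by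
  have h1 : y ^ m ≤ 1 := pow_le_one₀ hy.1 hy.2
  have h2 : 0 ≤ 1 - y ^ m := by linarith
  have := hy.1
  simp [thresh, derivative_pow]
  positivity

open Filter Topology in
lemma thresh_tendsto_one {y : ℝ} (hy : rexp (-1) ≤ y) (hy1 : y ≤ 1) :
    Tendsto (fun m => (thresh m).eval y) atTop (𝓝 1) := by
  have hy0 : 0 < y := (Real.exp_pos _).trans_le hy
  have hb : ∀ m : ℕ, (1 - y ^ m) ^ threshExp m ≤ rexp (-(m : ℝ)) := by
    intro m
    have h1 : y ^ m ≤ 1 := pow_le_one₀ hy0.le hy1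
    have h2 : rexp (-(m : ℝ)) ≤ y ^ m := by
      calc rexp (-(m : ℝ)) = rexp (-1) ^ m := by rw [← Real.exp_nat_mul]; congr 1; ring
        _ ≤ _ := pow_le_pow_left₀ (Real.exp_pos _).le hy _
    calc (1 - y ^ m) ^ threshExp m ≤ rexp (-y ^ m) ^ threshExp m :=
          pow_le_pow_left₀ (by linarith) (by linarith [Real.add_one_le_exp (-y ^ m)]) _
      _ = rexp (-(threshExp m * y ^ m)) := by rw [← Real.exp_nat_mul]; congr 1; ring
      _ ≤ rexp (-(m : ℝ)) := by
          refine Real.exp_le_exp.2 (neg_le_neg ?_)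
          have h3 : (m : ℝ) * rexp m ≤ threshExp m := Nat.le_ceil _
          calc (m : ℝ) = m * rexp m * rexp (-(m : ℝ)) := by
                rw [mul_assoc, ← Real.exp_add]; simp
            _ ≤ _ := by gcongr
  have h0 : ∀ m : ℕ, 0 ≤ (1 - y ^ m) ^ threshExp m := fun m =>
    pow_nonneg (by linarith [pow_le_one₀ (n := m) hy0.le hy1]) _
  have hlim : Tendsto (fun m : ℕ => (1 - y ^ m) ^ threshExp m) atTop (𝓝 0) :=
    squeeze_zero h0 hb (Real.tendsto_exp_neg_atTop_nhds_zero.comp tendsto_natCast_atTop_atTop)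
  simpa [thresh_eval] using hlim.const_sub 1

open Filter Topology in
lemma thresh_tendsto_zero {y : ℝ} (hy : y < rexp (-1)) (hy0 : 0 ≤ y) :
    Tendsto (fun m => (thresh m).eval y) atTop (𝓝 0) := by
  have he1 : rexp (-1) < 1 := by simp
  have hb : ∀ m : ℕ, (thresh m).eval y ≤ m * (rexp 1 * y) ^ m + y ^ m := by
    intro m
    rw [thresh_eval]
    have h1 : y ^ m ≤ 1 := pow_le_one₀ hy0 (hy.le.trans he1.le)
    have h0 : 0 ≤ y ^ m := pow_nonneg hy0 _
    have h2 := one_add_mul_le_pow (a := -y ^ m) (by linarith) (threshExp m)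
    have h3 : (threshExp m : ℝ) ≤ m * rexp m + 1 := (Nat.ceil_lt_add_one (by positivity)).le
    calc 1 - (1 - y ^ m) ^ threshExp m ≤ threshExp m * y ^ m := by
          rw [← sub_eq_add_neg] at h2; linarith
      _ ≤ (m * rexp m + 1) * y ^ m := by gcongr
      _ = _ := by rw [mul_pow, ← Real.exp_nat_mul, mul_one]; ring
  have h1 : rexp 1 * y < 1 := by
    calc rexp 1 * y < rexp 1 * rexp (-1) := by gcongr
      _ = 1 := by rw [← Real.exp_add]; simp
  have l1 := tendsto_self_mul_const_pow_of_lt_one (by positivity : 0 ≤ rexp 1 * y) h1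
  have l2 := tendsto_pow_atTop_nhds_zero_of_lt_one hy0 (hy.trans he1)
  refine squeeze_zero (fun m => (thresh_mem m ⟨hy0, hy.le.trans he1.le⟩).1) hb ?_
  simpa using l1.add l2

open Filter Topology in
/-- `exp (-u²/2) ≥ exp (-1)` means `u² ≤ 2`, so the threshold polynomials approximate indicators
of slabs. -/
lemma tendsto_integral_thresh {ι : Type*} [Fintype ι]
    (P : Measure (EuclideanSpace ℝ ι)) [IsProbabilityMeasure P] (s : Finset ι) :
    Tendsto (fun m => ∫ x, ∏ i ∈ s, (thresh m).eval (rexp (-(1 / 2) * x i ^ 2)) ∂P) atTop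
      (𝓝 (P.real {x | ∀ i ∈ s, x i ^ 2 ≤ 2})) := by
  have hms : MeasurableSet {x : EuclideanSpace ℝ ι | ∀ i ∈ s, x i ^ 2 ≤ 2} := by
    have : {x : EuclideanSpace ℝ ι | ∀ i ∈ s, x i ^ 2 ≤ 2} = ⋂ i ∈ s, {x | x i ^ 2 ≤ 2} := by
      ext; simp
    rw [this]
    exact Finset.measurableSet_biInter _ fun i _ =>
      measurableSet_le (by fun_prop) measurable_const
  rw [← integral_indicator_one hms]
  have hmem : ∀ u : ℝ, rexp (-(1 / 2) * u ^ 2) ∈ Set.Icc (0 : ℝ) 1 := fun u =>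
    ⟨(Real.exp_pos _).le, Real.exp_le_one_iff.2 (by nlinarith [sq_nonneg u])⟩
  refine tendsto_integral_of_dominated_convergence (fun _ => 1) (fun m => ?_) (integrable_const _)
    (fun m => .of_forall fun x => ?_) (.of_forall fun x => ?_)
  · refine Continuous.aestronglyMeasurable ?_
    refine continuous_finsetProd _ fun i _ => (thresh m).continuous.comp (by fun_prop)
  · rw [Real.norm_of_nonneg (Finset.prod_nonneg fun i _ => (thresh_mem m (hmem _)).1)]
    exact Finset.prod_le_one (fun i _ => (thresh_mem m (hmem _)).1)
      fun i _ => (thresh_mem m (hmem _)).2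
  · have : Set.indicator {x : EuclideanSpace ℝ ι | ∀ i ∈ s, x i ^ 2 ≤ 2} (1 : EuclideanSpace ℝ ι → ℝ) x =
        ∏ i ∈ s, if x i ^ 2 ≤ 2 then (1 : ℝ) else 0 := by
      rw [Finset.prod_ite_zero]
      simp [Set.indicator_apply]
    rw [this]
    refine tendsto_finsetProd _ fun i _ => ?_
    split_ifs with h
    · exact thresh_tendsto_one (Real.exp_le_exp.2 (by linarith)) (hmem _).2
    · exact thresh_tendsto_zero (Real.exp_lt_exp.2 (by linarith)) (hmem _).1

/-- Correlation inequality for two intersections of coordinate slabs. -/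
lemma slab_correlation {ι : Type*} [Fintype ι] [DecidableEq ι] {S : Matrix ι ι ℝ}
    (hS : S.PosSemidef) (σ : ι → Bool) :
    (multivariateGaussian 0 S).real {x | ∀ i, σ i → x i ^ 2 ≤ 2} *
      (multivariateGaussian 0 S).real {x | ∀ i, ¬ σ i → x i ^ 2 ≤ 2} ≤
      (multivariateGaussian 0 S).real {x | ∀ i, x i ^ 2 ≤ 2} := by
  have l0 := tendsto_integral_thresh (multivariateGaussian 0 S) Finset.univ
  have l1 := tendsto_integral_thresh (multivariateGaussian 0 S) (Finset.univ.filter fun i => σ i)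
  have l2 := tendsto_integral_thresh (multivariateGaussian 0 S) (Finset.univ.filter fun i => ¬ σ i)
  simp only [Finset.mem_univ, true_imp_iff, Finset.mem_filter, true_and] at l0 l1 l2
  refine le_of_tendsto_of_tendsto (l1.mul l2) l0 (.of_forall fun m => ?_)
  have h := monotoneOn_interp hS σ (thresh m) (fun y hy => (thresh_mem m hy).1)
    (fun y hy => thresh_deriv m hy) (Set.left_mem_Icc.2 zero_le_one)
    (Set.right_mem_Icc.2 zero_le_one) zero_le_one
  simp only [interp_one] at h
  rw [integral_prod_interp_zero hS σ (f := fun u => (thresh m).eval (rexp (-(1 / 2) * u ^ 2)))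
    (Continuous.measurable ((thresh m).continuous.comp (by fun_prop)))] at h
  exact h

/-! ### The Gaussian correlation inequality -/

open Matrix WithLp in
/-- Every centered Gaussian measure is given by its covariance matrix. -/
lemma eq_multivariateGaussian {ι : Type*} [Fintype ι] [DecidableEq ι]
    (μ : Measure (EuclideanSpace ℝ ι)) [IsGaussian μ] (h0 : μ[id] = 0) :
    ∃ S : Matrix ι ι ℝ, S.PosSemidef ∧ μ = multivariateGaussian 0 S := by
  set S : Matrix ι ι ℝ := Matrix.of fun i j => covarianceBilin μ (EuclideanSpace.single i 1)
    (EuclideanSpace.single j 1) with hS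
  have hsum : ∀ x : EuclideanSpace ℝ ι, x = ∑ i, x i • EuclideanSpace.single i (1 : ℝ) := by
    intro x
    ext j
    simp [Pi.single_apply]
  have hbil : ∀ x y : EuclideanSpace ℝ ι, covarianceBilin μ x y = ofLp x ⬝ᵥ S *ᵥ ofLp y := by
    intro x y
    conv_lhs => rw [hsum x, hsum y]
    simp only [map_sum, map_smul, _root_.sum_apply, _root_.smul_apply,
      smul_eq_mul, dotProduct, mulVec, hS, of_apply, Finset.mul_sum]
    rw [Finset.sum_comm]
    exact Finset.sum_congr rfl fun i _ => Finset.sum_congr rfl fun j _ => by ring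
  have hSp : S.PosSemidef := by
    refine PosSemidef.of_dotProduct_mulVec_nonneg ?_ fun x => ?_
    · ext i j
      simp [hS, covarianceBilin_comm]
    · have := covarianceBilin_self_nonneg (μ := μ) (toLp 2 x)
      rw [hbil] at this
      simpa using this
  refine ⟨S, hSp, IsGaussian.ext ?_ ?_⟩
  · rw [h0, integral_id_multivariateGaussian']
  · ext x y
    rw [hbil, covarianceBilin_multivariateGaussian hSp]


open WithLp in
/-- Correlation inequality for finite intersections of symmetric slabs, by pushing `μ` forward to
the coordinates given by the functionals. -/
lemma slab_correlation_gaussian {E : Type*} [NormedAddCommGroup E] [InnerProductSpace ℝ E] [FiniteDimensional ℝ E]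
    [MeasurableSpace E] [BorelSpace E]
    (μ : Measure E) [IsGaussian μ] (h0 : μ[id] = 0)
    {ι : Type*} [Fintype ι] [DecidableEq ι] (L : ι → E →L[ℝ] ℝ) (σ : ι → Bool) :
    μ.real {x | ∀ i, σ i → |L i x| ≤ 1} * μ.real {x | ∀ i, ¬ σ i → |L i x| ≤ 1} ≤
      μ.real {x | ∀ i, |L i x| ≤ 1} := by
  set F : E →L[ℝ] EuclideanSpace ℝ ι :=
    (PiLp.continuousLinearEquiv 2 ℝ (fun _ : ι => ℝ)).symm.toContinuousLinearMap ∘L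
      ContinuousLinearMap.pi (fun i => √2 • L i) with hF
  have hFi : ∀ x i, F x i = √2 * L i x := fun x i => by simp [hF]
  have hF0 : (μ.map F)[id] = 0 := by
    rw [integral_map (by fun_prop) (by fun_prop)]
    simp only [id]
    rw [ContinuousLinearMap.integral_comp_comm _ IsGaussian.integrable_fun_id]
    have : ∫ x, x ∂μ = 0 := h0
    rw [this, map_zero]
  obtain ⟨S, hS, hμS⟩ := eq_multivariateGaussian (μ.map F) hF0
  have h := slab_correlation hS σ
  have hiff : ∀ x i, F x i ^ 2 ≤ 2 ↔ |L i x| ≤ 1 := by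
    intro x i
    rw [hFi, mul_pow, Real.sq_sqrt (by norm_num), ← sq_abs, ← sq_le_one_iff₀ (abs_nonneg _)]
    constructor <;> intro h <;> linarith
  have hmeas : ∀ p : ι → Prop,
      MeasurableSet {x : EuclideanSpace ℝ ι | ∀ i, p i → x i ^ 2 ≤ 2} := by
    intro p
    have : {x : EuclideanSpace ℝ ι | ∀ i, p i → x i ^ 2 ≤ 2} =
        ⋂ i, {x : EuclideanSpace ℝ ι | p i → x i ^ 2 ≤ 2} := by ext; simp
    rw [this]
    refine MeasurableSet.iInter fun i => ?_
    by_cases hp : p i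
    · simp only [hp, true_imp_iff]
      exact measurableSet_le (by fun_prop) measurable_const
    · simp [hp]
  have hm3 : MeasurableSet {x : EuclideanSpace ℝ ι | ∀ i, x i ^ 2 ≤ 2} := by
    simpa using hmeas fun _ => True
  rw [← hμS, map_measureReal_apply F.measurable (hmeas _),
    map_measureReal_apply F.measurable (hmeas _), map_measureReal_apply F.measurable hm3] at h
  simpa only [Set.preimage_ofPred_eq, hiff] using h

/-- A nonempty closed symmetric convex set is a countable intersection of symmetric slabs
(Hahn-Banach and the Lindelöf property). -/
lemma exists_slabs {E : Type*} [NormedAddCommGroup E] [InnerProductSpace ℝ E] [FiniteDimensional ℝ E]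
    {A : Set E} (hc : IsClosed A) (hcv : Convex ℝ A) (hs : ∀ x ∈ A, -x ∈ A)
    (hne : A.Nonempty) : ∃ L : ℕ → E →L[ℝ] ℝ, A = {x | ∀ k, |L k x| ≤ 1} := by
  have h0 : (0 : E) ∈ A := by
    obtain ⟨x, hx⟩ := hne
    have := hcv hx (hs x hx) (by norm_num : (0 : ℝ) ≤ 1 / 2) (by norm_num : (0 : ℝ) ≤ 1 / 2)
      (by norm_num)
    simpa using this
  have hsep : ∀ x : (Aᶜ : Set E), ∃ L : E →L[ℝ] ℝ, (∀ a ∈ A, |L a| ≤ 1) ∧ 1 < |L x| := by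
    intro x
    obtain ⟨f, u, hf, hu⟩ := geometric_hahn_banach_closed_point hcv hc x.2
    have hu0 : 0 < u := by simpa using hf 0 h0
    refine ⟨u⁻¹ • f, fun a ha => ?_, ?_⟩
    · have h1 := hf a ha
      have h2 := hf _ (hs a ha)
      rw [map_neg] at h2
      have : |f a| ≤ u := abs_le.2 ⟨by linarith, h1.le⟩
      simp only [_root_.smul_apply, smul_eq_mul, abs_mul, abs_of_pos (inv_pos.2 hu0)]
      calc u⁻¹ * |f a| ≤ u⁻¹ * u := by gcongr
        _ = 1 := inv_mul_cancel₀ hu0.ne'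
    · simp only [_root_.smul_apply, smul_eq_mul]
      refine lt_of_lt_of_le ?_ (le_abs_self _)
      calc 1 = u⁻¹ * u := (inv_mul_cancel₀ hu0.ne').symm
        _ < _ := by gcongr
  choose L hL1 hL2 using hsep
  obtain ⟨T, hT, hTu⟩ := TopologicalSpace.isOpen_iUnion_countable
    (fun x : (Aᶜ : Set E) => {y | 1 < |L x y|})
    (fun x => isOpen_lt continuous_const (by fun_prop))
  have hcount : (insert 0 (L '' T)).Countable := (hT.image L).insert 0
  obtain ⟨f, hf⟩ := hcount.exists_eq_range (Set.insert_nonempty _ _)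
  refine ⟨f, Set.Subset.antisymm ?_ ?_⟩
  · intro a ha k
    have : f k ∈ insert 0 (L '' T) := hf ▸ Set.mem_range_self k
    rcases this with h | ⟨x, _, h⟩
    · simp [h]
    · rw [← h]; exact hL1 x a ha
  · intro y hy
    by_contra hyA
    have : y ∈ ⋃ x : (Aᶜ : Set E), {y | 1 < |L x y|} := Set.mem_iUnion.2 ⟨⟨y, hyA⟩, hL2 ⟨y, hyA⟩⟩
    rw [← hTu] at this
    simp only [Set.mem_iUnion] at this
    obtain ⟨x, hx, hxy⟩ := this
    have : L x ∈ Set.range f := hf ▸ Set.mem_insert_of_mem _ ⟨x, hx, rfl⟩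
    obtain ⟨k, hk⟩ := this
    have h1 := hy k
    rw [hk] at h1
    exact absurd hxy (not_lt.2 h1)

open Filter Topology in
/-- Gaussian correlation inequality for closed symmetric convex sets. -/
lemma gci_closed {E : Type*} [NormedAddCommGroup E] [InnerProductSpace ℝ E] [FiniteDimensional ℝ E]
    [MeasurableSpace E] [BorelSpace E]
    (μ : Measure E) [IsGaussian μ] (h0 : μ[id] = 0) {A B : Set E}
    (hAc : IsClosed A) (hA : Convex ℝ A) (hAs : ∀ x ∈ A, -x ∈ A)
    (hBc : IsClosed B) (hB : Convex ℝ B) (hBs : ∀ x ∈ B, -x ∈ B) :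
    μ.real A * μ.real B ≤ μ.real (A ∩ B) := by
  rcases A.eq_empty_or_nonempty with rfl | hAn
  · simp
  rcases B.eq_empty_or_nonempty with rfl | hBn
  · simp
  obtain ⟨L, hL⟩ := exists_slabs hAc hA hAs hAn
  obtain ⟨M, hM⟩ := exists_slabs hBc hB hBs hBn
  have hlim : ∀ Q : ℕ → Set E, (∀ k, MeasurableSet (Q k)) →
      Tendsto (fun N => μ.real {x | ∀ k : Fin N, x ∈ Q k}) atTop (𝓝 (μ.real {x | ∀ k, x ∈ Q k})) := by
    intro Q hQ
    have e : {x | ∀ k, x ∈ Q k} = ⋂ N : ℕ, {x | ∀ k : Fin N, x ∈ Q k} := by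
      ext x
      simp only [Set.mem_ofPred_eq, Set.mem_iInter]
      exact ⟨fun h N k => h k, fun h k => h (k + 1) ⟨k, Nat.lt_succ_self k⟩⟩
    rw [e]
    refine (ENNReal.tendsto_toReal (measure_ne_top _ _)).comp
      (tendsto_measure_iInter_atTop (fun N => ?_) ?_ ⟨0, measure_ne_top _ _⟩)
    · have : {x | ∀ k : Fin N, x ∈ Q k} = ⋂ k : Fin N, Q k := by ext; simp
      rw [this]
      exact (MeasurableSet.iInter fun k : Fin N => hQ k).nullMeasurableSet
    · intro N N' h x hx k
      exact hx ⟨k, k.2.trans_le h⟩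
  have hm : ∀ f : E →L[ℝ] ℝ, MeasurableSet {x | |f x| ≤ 1} := fun f =>
    (isClosed_le (by fun_prop) continuous_const).measurableSet
  have lA := hlim (fun k => {x | |L k x| ≤ 1}) (fun k => hm _)
  have lB := hlim (fun k => {x | |M k x| ≤ 1}) (fun k => hm _)
  have lAB := hlim (fun k => {x | |L k x| ≤ 1} ∩ {x | |M k x| ≤ 1})
    (fun k => (hm _).inter (hm _))
  have eAB : A ∩ B = {x | ∀ k, x ∈ {x | |L k x| ≤ 1} ∩ {x | |M k x| ≤ 1}} := by
    rw [hL, hM]; ext x; simp [forall_and]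
  rw [eAB, hL, hM]
  refine le_of_tendsto_of_tendsto (lA.mul lB) lAB (.of_forall fun N => ?_)
  have := slab_correlation_gaussian μ h0 (ι := Bool × Fin N)
    (fun i => if i.1 then L i.2 else M i.2) (fun i => i.1)
  simp only [Prod.forall, Bool.forall_bool] at this
  simpa [and_comm, forall_and] using this

lemma convex_sym_closure {E : Type*} [NormedAddCommGroup E] {A : Set E} (hAs : ∀ x ∈ A, -x ∈ A) : ∀ x ∈ closure A, -x ∈ closure A := by
  intro x hx
  exact map_mem_closure continuous_neg hx hAs

lemma pi_gaussian_absolutelyContinuous (n : ℕ) :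
    Measure.pi (fun _ : Fin n => gaussianReal 0 1) ≪ (volume : Measure (Fin n → ℝ)) := by
  rw [volume_pi]
  induction n with
  | zero => rw [Measure.pi_of_empty, Measure.pi_of_empty]
  | succ n ih =>
    have h1 := measurePreserving_piFinSuccAbove (fun _ : Fin (n + 1) => gaussianReal 0 1) 0
    have h2 := measurePreserving_piFinSuccAbove (fun _ : Fin (n + 1) => (volume : Measure ℝ)) 0
    rw [← h1.symm.map_eq, ← h2.symm.map_eq]
    exact ((gaussianReal_absolutelyContinuous 0 one_ne_zero).prod ih).map
      (MeasurableEquiv.measurable _)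

section
variable {n : ℕ}
open WithLp

/-- The frontier of a convex set is Lebesgue null, hence null for the standard Gaussian. -/
lemma stdGaussian_closure {A : Set (EuclideanSpace ℝ (Fin n))} (hA : Convex ℝ A)
    : closure A =ᵐ[stdGaussian _] A := by
  have hfr : stdGaussian (EuclideanSpace ℝ (Fin n)) (frontier A) = 0 := by
    have hT : MeasurableSet (frontier A) := isClosed_frontier.measurableSet
    rw [← map_pi_eq_stdGaussian, Measure.map_apply (by fun_prop) hT]
    apply pi_gaussian_absolutelyContinuous
    have e : toLp 2 ⁻¹' (frontier A) = frontier (toLp 2 ⁻¹' A : Set (Fin n → ℝ)) :=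
      (PiLp.homeomorph 2 (fun _ : Fin n => ℝ)).symm.preimage_frontier A
    rw [e]
    exact (hA.is_linear_preimage ⟨fun x y => by simp, fun c x => by simp⟩).addHaar_frontier _
  refine (Filter.EventuallyLE.antisymm ?_ subset_closure.eventuallyLE)
  refine ae_le_set.2 (measure_mono_null ?_ hfr)
  exact fun x hx => ⟨hx.1, fun h => hx.2 (interior_subset h)⟩

open MatrixOrder in
/-- **Gaussian correlation inequality** (Royen). A possibly degenerate `μ` is a linear image of
the standard Gaussian, for which convex sets may be replaced by their closures. -/
lemma gci (μ : Measure (EuclideanSpace ℝ (Fin n))) [IsGaussian μ] (h0 : μ[id] = 0)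
    {A B : Set (EuclideanSpace ℝ (Fin n))}
    (hAm : MeasurableSet A) (hA : Convex ℝ A) (hAs : ∀ x ∈ A, -x ∈ A)
    (hBm : MeasurableSet B) (hB : Convex ℝ B) (hBs : ∀ x ∈ B, -x ∈ B) :
    μ.real A * μ.real B ≤ μ.real (A ∩ B) := by
  obtain ⟨S, hS, hμS⟩ := eq_multivariateGaussian μ h0
  rw [hμS, multivariateGaussian]
  simp only [zero_add]
  set T := Matrix.toEuclideanCLM (𝕜 := ℝ) (CFC.sqrt S)
  have hTm : Measurable fun x => T x := T.measurable
  rw [map_measureReal_apply hTm hAm, map_measureReal_apply hTm hBm,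
    map_measureReal_apply hTm (hAm.inter hBm), Set.preimage_inter]
  have key : ∀ C : Set (EuclideanSpace ℝ (Fin n)), Convex ℝ C → (∀ x ∈ C, -x ∈ C) →
      Convex ℝ ((fun x => T x) ⁻¹' C) ∧ ∀ x ∈ (fun x => T x) ⁻¹' C, -x ∈ (fun x => T x) ⁻¹' C := by
    intro C hC hCs
    refine ⟨hC.is_linear_preimage ⟨fun x y => by simp, fun c x => by simp⟩, fun x hx => ?_⟩
    have := hCs _ hx
    simpa using this
  obtain ⟨hA', hAs'⟩ := key A hA hAs
  obtain ⟨hB', hBs'⟩ := key B hB hBs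
  have h := gci_closed (stdGaussian _) integral_id_stdGaussian isClosed_closure hA'.closure
    (convex_sym_closure hAs') isClosed_closure hB'.closure (convex_sym_closure hBs')
  simp only [measureReal_def, measure_congr (stdGaussian_closure hA'),
    measure_congr (stdGaussian_closure hB'),
    measure_congr ((stdGaussian_closure hA').inter (stdGaussian_closure hB'))] at h
  exact h

end

/-! ### Rotation invariance, tails and crossing probabilities -/

section
variable {E : Type*} [NormedAddCommGroup E] [NormedSpace ℝ E]

/-- Triangle inequality for the gauge of a symmetric convex set. -/
lemma lin_mem_smul {C : Set E} (hC : Convex ℝ C) (hCs : ∀ x ∈ C, -x ∈ C) {x y : E} {a b c d e : ℝ}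
    (ha : 0 ≤ a) (hb : 0 ≤ b) (hx : x ∈ a • C) (hy : y ∈ b • C) (he : |c| * a + |d| * b ≤ e) :
    c • x + d • y ∈ e • C := by
  have h1 : ∀ {x : E} {a c : ℝ}, x ∈ a • C → c • x ∈ (|c| * a) • C := by
    rintro x a c ⟨z, hz, rfl⟩
    rcases abs_cases c with ⟨h, _⟩ | ⟨h, _⟩
    · exact ⟨z, hz, by simp [h, smul_smul]⟩
    · exact ⟨-z, hCs z hz, by simp [h, smul_smul]⟩
  have h0 : (0 : E) ∈ C := by
    obtain ⟨z, hz, _⟩ := hx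
    have := hC hz (hCs z hz) (by norm_num : (0 : ℝ) ≤ 1 / 2) (by norm_num : (0 : ℝ) ≤ 1 / 2)
      (by norm_num)
    simpa using this
  have h2 : c • x + d • y ∈ (|c| * a + |d| * b) • C := by
    rw [hC.add_smul (by positivity) (by positivity)]
    exact Set.add_mem_add (h1 hx) (h1 hy)
  rcases eq_or_lt_of_le he with h | h
  · rwa [h] at h2
  have hr : 0 ≤ |c| * a + |d| * b := by positivity
  obtain ⟨z, hz, hzx⟩ := h2
  have he0 : 0 < e := hr.trans_lt h
  refine ⟨((|c| * a + |d| * b) / e) • z, ?_, ?_⟩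
  · exact hC.smul_mem_of_zero_mem h0 hz ⟨by positivity, (div_le_one he0).2 he⟩
  · simp only [] at hzx ⊢
    rw [smul_smul, mul_div_cancel₀ _ he0.ne', hzx]

lemma smul_mono {C : Set E} (hC : Convex ℝ C) (hCs : ∀ x ∈ C, -x ∈ C) {a b : ℝ} (ha : 0 ≤ a)
    (hab : a ≤ b) : a • C ⊆ b • C := by
  intro x hx
  have := lin_mem_smul hC hCs (c := 1) (d := 0) ha ha hx hx (e := b) (by simpa using hab)
  simpa using this

/-- A discrete path that starts in `C`, ends outside it and has steps in `0.41 • C` visits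
`√2 • C \ C`, at its first exit from `C`. -/
lemma exists_crossing {C : Set E} (hC : Convex ℝ C) (hCs : ∀ x ∈ C, -x ∈ C) (x : ℕ → E) (N : ℕ)
    (h0 : x 0 ∈ C) (hN : x N ∉ C) (hstep : ∀ j, x (j + 1) - x j ∈ (0.41 : ℝ) • C) :
    ∃ j ∈ Finset.range (N + 1), x j ∈ √2 • C ∧ x j ∉ C := by
  classical
  have hex : ∃ j, x j ∉ C := ⟨N, hN⟩
  obtain ⟨k, hk⟩ : ∃ k, Nat.find hex = k + 1 := Nat.exists_eq_succ_of_ne_zero fun h =>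
    (h ▸ Nat.find_spec hex) h0
  have hs : x (k + 1) ∉ C := hk ▸ Nat.find_spec hex
  have hkC : x k ∈ C := by
    by_contra h
    have := Nat.find_min' hex h
    omega
  refine ⟨k + 1, ?_, ?_, hs⟩
  · have := Nat.find_min' hex hN
    simp only [Finset.mem_range]; omega
  · have h2 : (1.41 : ℝ) ≤ √2 := Real.le_sqrt_of_sq_le (by norm_num)
    have := lin_mem_smul hC hCs (c := 1) (d := 1) (a := 1) (b := 0.41) (e := √2) (by norm_num)
      (by norm_num) (by simpa using hkC) (hstep k) (by norm_num at h2 ⊢; linarith)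
    simpa using this

variable [MeasurableSpace E] [BorelSpace E] [SecondCountableTopology E]
  {μ : Measure E} [IsProbabilityMeasure μ]

/-- Rotation invariance: the rotated pair has the law of the original pair. -/
lemma rot_prob (hrot : ∀ θ, (μ.prod μ).map (ContinuousLinearMap.rotation θ) = μ.prod μ) (θ : ℝ)
    {A B : Set E} (hA : MeasurableSet A) (hB : MeasurableSet B) :
    (μ.prod μ).real {q | cos θ • q.1 + sin θ • q.2 ∈ A ∧ -sin θ • q.1 + cos θ • q.2 ∈ B} =
      μ.real A * μ.real B := by
  rw [← measureReal_prod_prod, ← hrot θ, map_measureReal_apply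
    (ContinuousLinearMap.measurable _) (hA.prod hB), hrot θ]
  rfl

lemma rot_prob1 (hrot : ∀ θ, (μ.prod μ).map (ContinuousLinearMap.rotation θ) = μ.prod μ) (θ : ℝ)
    {A : Set E} (hA : MeasurableSet A) :
    (μ.prod μ).real {q | cos θ • q.1 + sin θ • q.2 ∈ A} = μ.real A := by
  have := rot_prob hrot θ hA MeasurableSet.univ
  simpa using this

variable (hrot : ∀ θ, (μ.prod μ).map (ContinuousLinearMap.rotation θ) = μ.prod μ)
  {C : Set E} (hCm : MeasurableSet C) (hC : Convex ℝ C) (hCs : ∀ x ∈ C, -x ∈ C)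

include hrot hCm hC hCs

/-- Fernique's tail estimate: if `(x - y)/√2` or `(x + y)/√2` lies in `r • C` and `x ∈ a • C`, then
`y ∈ b • C`. -/
lemma fernique_step {a b r : ℝ} (ha : 0 ≤ a) (hr : 0 ≤ r) (hb : a + √2 * r ≤ b) :
    μ.real (a • C) * μ.real (b • C)ᶜ ≤ μ.real (r • C)ᶜ ^ 2 := by
  have hrm : MeasurableSet (r • C)ᶜ := (hCm.const_smul₀ r).compl
  rw [sq, ← rot_prob hrot (π / 4) hrm hrm, ← measureReal_prod_prod]
  refine measureReal_mono ?_
  rintro ⟨x, y⟩ ⟨hx, hy⟩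
  simp only [Set.mem_compl_iff, Set.mem_ofPred_eq, cos_pi_div_four, sin_pi_div_four] at hx hy ⊢
  have h2 : √2 * √2 = 2 := Real.mul_self_sqrt (by norm_num)
  have h3 : √2 * (√2 / 2) = 1 := by linarith
  have e1 : y = √2 • ((√2 / 2) • x + (√2 / 2) • y) + (-1 : ℝ) • x := by
    rw [smul_add, smul_smul, smul_smul, h3]; module
  have e2 : y = √2 • (-(√2 / 2) • x + (√2 / 2) • y) + (1 : ℝ) • x := by
    rw [smul_add, smul_smul, smul_smul, mul_neg, h3]; module
  have hs : |√2| = √2 := abs_of_nonneg (by positivity)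
  constructor <;> intro hz <;> apply hy
  · rw [e1]; exact lin_mem_smul hC hCs hr ha hz hx (by rw [hs]; norm_num; linarith)
  · rw [e2]; exact lin_mem_smul hC hCs hr ha hz hx (by rw [hs]; norm_num; linarith)

/-- The mass of the part of `(64 • K)ᶜ` outside `√2 • C` is controlled by the product of
`μ(Cᶜ)` and a tail of `K`. For `x` in that set and `y ∈ K`, both rotations of `(x, y)` by `± π/4`
leave `44 • K`, and they cannot both be in `C`. -/
lemma decoupling {K : Set E} (hKm : MeasurableSet K) (hK : Convex ℝ K) (hKs : ∀ x ∈ K, -x ∈ K) :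
    μ.real ((√2 • C)ᶜ ∩ ((64 : ℝ) • K)ᶜ) * μ.real K ≤
      2 * (μ.real Cᶜ * μ.real ((44 : ℝ) • K)ᶜ) := by
  have h44 : MeasurableSet ((44 : ℝ) • K)ᶜ := (hKm.const_smul₀ (44 : ℝ)).compl
  have r1 := rot_prob hrot (π / 4) hCm.compl h44
  have r2 := rot_prob hrot (π / 4) h44 hCm.compl
  rw [two_mul]
  nth_rw 1 [← r1]
  rw [mul_comm (μ.real Cᶜ), ← r2, ← measureReal_prod_prod]
  refine (measureReal_mono ?_).trans (measureReal_union_le _ _)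
  rintro ⟨x, y⟩ ⟨⟨hx, hxK⟩, hy⟩
  simp only [Set.mem_compl_iff, Set.mem_ofPred_eq, cos_pi_div_four, sin_pi_div_four, Set.mem_union]
    at hx hxK hy ⊢
  have h2 : √2 * √2 = 2 := Real.mul_self_sqrt (by norm_num)
  have h3 : √2 * (√2 / 2) = 1 := by linarith
  have hs : |√2| = √2 := abs_of_nonneg (by positivity)
  have hs2 : |√2 / 2| = √2 / 2 := abs_of_nonneg (by positivity)
  have hlt : √2 ≤ 1.4143 := Real.sqrt_le_iff.2 ⟨by norm_num, by norm_num⟩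
  have e1 : x = √2 • ((√2 / 2) • x + (√2 / 2) • y) + (-1 : ℝ) • y := by
    rw [smul_add, smul_smul, smul_smul, h3]; module
  have e2 : x = (-√2) • (-(√2 / 2) • x + (√2 / 2) • y) + (1 : ℝ) • y := by
    rw [smul_add, smul_smul, smul_smul, neg_mul_neg, neg_mul, h3]; module
  have e3 : x = (√2 / 2) • ((√2 / 2) • x + (√2 / 2) • y) +
      (-(√2 / 2)) • (-(√2 / 2) • x + (√2 / 2) • y) := by
    rw [smul_add, smul_add, smul_smul, smul_smul, smul_smul, smul_smul, neg_mul_neg, neg_mul,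
      show √2 / 2 * (√2 / 2) = 1 / 2 by linarith]
    module
  have k1 : (√2 / 2) • x + (√2 / 2) • y ∉ (44 : ℝ) • K := by
    intro hz
    refine hxK ?_
    rw [e1]
    exact lin_mem_smul hK hKs (b := 1) (by norm_num) (by norm_num) hz (by simpa using hy)
      (by rw [hs]; norm_num at hlt ⊢; linarith)
  have k2 : -(√2 / 2) • x + (√2 / 2) • y ∉ (44 : ℝ) • K := by
    intro hz
    refine hxK ?_
    rw [e2]
    exact lin_mem_smul hK hKs (b := 1) (by norm_num) (by norm_num) hz (by simpa using hy)
      (by rw [abs_neg, hs]; norm_num at hlt ⊢; linarith)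
  by_cases hz : (√2 / 2) • x + (√2 / 2) • y ∈ C
  · right
    refine ⟨k1, fun hz' => hx ?_⟩
    rw [e3]
    exact lin_mem_smul hC hCs (a := 1) (b := 1) (by norm_num) (by norm_num) (by simpa using hz)
      (by simpa using hz') (by rw [abs_neg, hs2]; linarith)
  · left
    exact ⟨hz, k2⟩

/-- Along the rotation path `cos(jθ) x + sin(jθ) y`, each point has law `μ`. If the path leaves
`C` by time `N` with small steps, one of its `N + 1` points falls in `√2 • C \ C`; a union bound
then estimates the probability of leaving from above by the mass of that shell. -/
lemma crossing_prob (θ : ℝ) (N : ℕ) {β : ℝ} (hβ : 0 ≤ β) (hθ : |θ| * (1 + β) ≤ 0.41)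
    {U : Set (E × E)} (hU : ∀ q ∈ U, q.1 ∈ C ∧ q.2 ∈ β • C ∧
      cos (N * θ) • q.1 + sin (N * θ) • q.2 ∉ C) :
    (μ.prod μ).real U ≤ (N + 1) * (μ.real (√2 • C) - μ.real C) := by
  have h1 : (1 : ℝ) ≤ √2 := Real.le_sqrt_of_sq_le (by norm_num)
  have hsub : C ⊆ √2 • C := by simpa using smul_mono hC hCs zero_le_one h1
  have hm2 : MeasurableSet (√2 • C) := hCm.const_smul₀ _
  have hcover : U ⊆ ⋃ j ∈ Finset.range (N + 1),
      {q : E × E | cos ((j : ℕ) * θ) • q.1 + sin (j * θ) • q.2 ∈ √2 • C \ C} := by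
    intro q hq
    obtain ⟨hq1, hq2, hq3⟩ := hU q hq
    have hstep : ∀ j : ℕ, (cos (((j + 1 : ℕ) : ℝ) * θ) • q.1 + sin (((j + 1 : ℕ) : ℝ) * θ) • q.2) -
        (cos ((j : ℝ) * θ) • q.1 + sin ((j : ℝ) * θ) • q.2) ∈ (0.41 : ℝ) • C := by
      intro j
      have e : cos (((j + 1 : ℕ) : ℝ) * θ) • q.1 + sin (((j + 1 : ℕ) : ℝ) * θ) • q.2 -
        (cos ((j : ℝ) * θ) • q.1 + sin ((j : ℝ) * θ) • q.2) =
        (cos (((j + 1 : ℕ) : ℝ) * θ) - cos ((j : ℝ) * θ)) • q.1 +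
        (sin (((j + 1 : ℕ) : ℝ) * θ) - sin ((j : ℝ) * θ)) • q.2 := by module
      have ed : ((j + 1 : ℕ) : ℝ) * θ - (j : ℝ) * θ = θ := by push_cast; ring
      have hc : |cos (((j + 1 : ℕ) : ℝ) * θ) - cos ((j : ℝ) * θ)| ≤ |θ| := by
        have := Real.abs_cos_sub_cos_le (((j + 1 : ℕ) : ℝ) * θ) ((j : ℝ) * θ)
        rwa [ed] at this
      have hs : |sin (((j + 1 : ℕ) : ℝ) * θ) - sin ((j : ℝ) * θ)| ≤ |θ| := by
        have := Real.abs_sin_sub_sin_le (((j + 1 : ℕ) : ℝ) * θ) ((j : ℝ) * θ)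
        rwa [ed] at this
      rw [e]
      refine lin_mem_smul hC hCs (a := 1) (b := β) (by norm_num) hβ (by simpa using hq1) hq2 ?_
      calc _ ≤ |θ| * 1 + |θ| * β := by gcongr
        _ ≤ _ := by linarith
    obtain ⟨j, hj, hj'⟩ := exists_crossing hC hCs
      (fun j => cos ((j : ℕ) * θ) • q.1 + sin (j * θ) • q.2) N (by simpa using hq1) hq3 hstep
    exact Set.mem_biUnion hj hj'
  calc (μ.prod μ).real U ≤ (μ.prod μ).real (⋃ j ∈ Finset.range (N + 1),
      {q : E × E | cos ((j : ℕ) * θ) • q.1 + sin (j * θ) • q.2 ∈ √2 • C \ C}) :=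
        measureReal_mono hcover (measure_ne_top _ _)
    _ ≤ ∑ j ∈ Finset.range (N + 1), (μ.prod μ).real
      {q : E × E | cos ((j : ℕ) * θ) • q.1 + sin (j * θ) • q.2 ∈ √2 • C \ C} :=
        measureReal_biUnion_finset_le _ _
    _ = ∑ j ∈ Finset.range (N + 1), (μ.real (√2 • C) - μ.real C) := by
        refine Finset.sum_congr rfl fun j _ => ?_
        rw [rot_prob1 hrot _ (hm2.diff hCm), measureReal_sdiff hsub hCm]
    _ = _ := by
        rw [Finset.sum_const, Finset.card_range, nsmul_eq_mul]; push_cast; ring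

/-- Any symmetric convex set of positive measure has small tails. The `N` rotations by angles
`i/N` give disjoint events of equal probability: if the rotated first coordinates at two of these
angles lie in `C`, then the rotated second coordinate lies in `4N • C`. -/
lemma tail_bound {N : ℕ} (hN : 0 < N) : N * (μ.real C * μ.real ((4 * N : ℝ) • C)ᶜ) ≤ 1 := by
  have hN' : (0 : ℝ) < N := by exact_mod_cast hN
  have hm4 : MeasurableSet ((4 * N : ℝ) • C)ᶜ := (hCm.const_smul₀ _).compl
  set V : ℕ → Set (E × E) := fun i => {q | cos (i / N) • q.1 + sin (i / N) • q.2 ∈ C ∧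
    -sin (i / N) • q.1 + cos (i / N) • q.2 ∈ ((4 * N : ℝ) • C)ᶜ} with hV
  have hVm : ∀ i, MeasurableSet (V i) := fun i =>
    ((by fun_prop : Measurable fun q : E × E => cos (i / N : ℝ) • q.1 + sin (i / N : ℝ) • q.2)
      hCm).inter ((by fun_prop : Measurable fun q : E × E =>
        -sin (i / N : ℝ) • q.1 + cos (i / N : ℝ) • q.2) hm4)
  have hVP : ∀ i, (μ.prod μ).real (V i) = μ.real C * μ.real ((4 * N : ℝ) • C)ᶜ :=
    fun i => rot_prob hrot _ hCm hm4
  have key : ∀ i j : ℕ, i < N → j < N → i ≠ j → Disjoint (V i) (V j) := by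
    intro i j hi hj hij
    rw [Set.disjoint_left]
    rintro ⟨x, y⟩ ⟨h1, h2⟩ ⟨h3, -⟩
    simp only [Set.mem_compl_iff] at h1 h2 h3
    apply h2
    set α : ℝ := i / N
    set d : ℝ := (j : ℝ) / N - α with hd
    have hdj : (j : ℝ) / N = α + d := by rw [hd]; ring
    have hdN : d * N = (j : ℝ) - i := by simp only [hd, α]; field_simp
    have hd1 : 1 ≤ |d| * N := by
      rw [← abs_of_pos hN', ← abs_mul, hdN]
      have : (1 : ℤ) ≤ |(j : ℤ) - i| := Int.one_le_abs (by omega)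
      exact_mod_cast this
    have hd2 : |d| ≤ 1 := by
      have : |d| * N ≤ N := by
        rw [← abs_of_pos hN', ← abs_mul, hdN, abs_of_pos hN']
        have h1 : (i : ℝ) ≤ N := by exact_mod_cast hi.le
        have h2 : (j : ℝ) ≤ N := by exact_mod_cast hj.le
        rw [abs_le]; constructor <;> linarith [Nat.cast_nonneg (α := ℝ) i, Nat.cast_nonneg (α := ℝ) j]
      exact le_of_mul_le_mul_right (by linarith) hN'
    have hsin : |d| / 2 ≤ |sin d| := by
      have h1 := Real.mul_le_sin (abs_nonneg d) (by linarith [Real.pi_gt_three])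
      have h2 : sin |d| ≤ |sin d| := by
        rcases abs_cases d with ⟨h, _⟩ | ⟨h, _⟩ <;> rw [h]
        · exact le_abs_self _
        · rw [sin_neg]; exact neg_le_abs _
      have h3 : 1 / 2 ≤ 2 / π := by
        rw [div_le_div_iff₀ (by norm_num) Real.pi_pos]; linarith [Real.pi_le_four]
      nlinarith [abs_nonneg d]
    have hdpos : 0 < |d| := pos_of_mul_pos_left (by linarith) hN'.le
    have hsp : 0 < |sin d| := by linarith
    have hs0 : sin d ≠ 0 := abs_pos.1 hsp
    have e : -sin α • x + cos α • y = (sin d)⁻¹ • (cos (α + d) • x + sin (α + d) • y) +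
        (-(cos d / sin d)) • (cos α • x + sin α • y) := by
      have e1 : ∀ u v : ℝ, (u - v * cos d) / sin d = (sin d)⁻¹ * u + -(cos d / sin d) * v := by
        intro u v; field_simp; ring
      have hx : -sin α = (sin d)⁻¹ * cos (α + d) + -(cos d / sin d) * cos α := by
        rw [← e1, cos_add]; field_simp; ring
      have hy : cos α = (sin d)⁻¹ * sin (α + d) + -(cos d / sin d) * sin α := by
        rw [← e1, sin_add]; field_simp; ring
      calc -sin α • x + cos α • y = ((sin d)⁻¹ * cos (α + d) + -(cos d / sin d) * cos α) • x +
            ((sin d)⁻¹ * sin (α + d) + -(cos d / sin d) * sin α) • y := by rw [← hx, ← hy]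
        _ = _ := by module
    rw [hdj] at h3
    show -sin α • x + cos α • y ∈ _
    rw [e]
    refine lin_mem_smul hC hCs (a := 1) (b := 1) zero_le_one zero_le_one (by simpa using h3)
      (by simpa using h1) ?_
    rw [abs_neg, abs_inv, abs_div, mul_one, mul_one]
    have h4 : |cos d| / |sin d| ≤ 1 / |sin d| := by gcongr; exact abs_cos_le_one d
    have h5 : 1 / |sin d| ≤ 2 * N := by
      rw [div_le_iff₀ hsp]
      nlinarith
    rw [← one_div]; linarith
  have hsum : ∑ i ∈ Finset.range N, (μ.prod μ).real (V i) =
      (μ.prod μ).real (⋃ i ∈ Finset.range N, V i) := by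
    rw [measureReal_biUnion_finset]
    · intro i hi j hj hij
      exact key i j (by simpa using hi) (by simpa using hj) hij
    · exact fun i _ => hVm i
  have : ∑ i ∈ Finset.range N, (μ.prod μ).real (V i) ≤ 1 := by
    rw [hsum]; exact measureReal_le_one
  simpa [hVP] using this

end

/-! ### Gain from dilation and the remainder measure -/

section
variable {E : Type*} [NormedAddCommGroup E] [NormedSpace ℝ E] [MeasurableSpace E]
  {μ : Measure E} [IsProbabilityMeasure μ]

lemma compl_smul_anti {C : Set E} (hC : Convex ℝ C) (hCs : ∀ x ∈ C, -x ∈ C) {a b : ℝ}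
    (ha : 0 ≤ a) (hab : a ≤ b) : μ.real (b • C)ᶜ ≤ μ.real (a • C)ᶜ :=
  measureReal_mono (Set.compl_subset_compl.2 (smul_mono hC hCs ha hab))

variable [BorelSpace E]

lemma annulus_prob {C : Set E} (hCm : MeasurableSet C) (hC : Convex ℝ C)
    (hCs : ∀ x ∈ C, -x ∈ C) {a b : ℝ} (ha : 0 ≤ a) (hab : a ≤ b) :
    (μ.prod μ).real (C ×ˢ (b • C \ a • C)) =
      μ.real C * (μ.real (a • C)ᶜ - μ.real (b • C)ᶜ) := by
  rw [measureReal_prod_prod, measureReal_sdiff (smul_mono hC hCs ha hab) (hCm.const_smul₀ a),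
    probReal_compl_eq_one_sub (hCm.const_smul₀ a), probReal_compl_eq_one_sub (hCm.const_smul₀ b)]
  ring

variable [SecondCountableTopology E]
  (hrot : ∀ θ, (μ.prod μ).map (ContinuousLinearMap.rotation θ) = μ.prod μ)
  {C : Set E} (hCm : MeasurableSet C) (hC : Convex ℝ C) (hCs : ∀ x ∈ C, -x ∈ C)

include hrot hCm hC hCs

/-- A dyadic scale `t` at which the tail of `C` drops below `1/10`. -/
lemma exists_scale (hb : 0 < μ.real C) (hq : 0.1 ≤ μ.real Cᶜ) :
    ∃ t : ℝ, 1 ≤ t ∧ 0.1 ≤ μ.real (t • C)ᶜ ∧ μ.real ((2 * t) • C)ᶜ < 0.1 := by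
  classical
  have hex : ∃ m : ℕ, μ.real ((2 ^ m : ℝ) • C)ᶜ < 0.1 := by
    obtain ⟨N, hN⟩ := exists_nat_gt (10 / μ.real C)
    have hN0 : (0 : ℝ) < N := lt_trans (by positivity) hN
    have h1 := tail_bound hrot hCm hC hCs (N := N) (by exact_mod_cast hN0)
    rw [div_lt_iff₀ hb] at hN
    refine ⟨4 * N, lt_of_le_of_lt (compl_smul_anti hC hCs (a := 4 * N) (by positivity) ?_) ?_⟩
    · have := (Nat.lt_two_pow_self (n := 4 * N)).le
      exact_mod_cast this
    · by_contra h
      push Not at h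
      nlinarith
  obtain ⟨k, hk⟩ : ∃ k, Nat.find hex = k + 1 := Nat.exists_eq_succ_of_ne_zero fun h => by
    have := Nat.find_spec hex
    rw [h, pow_zero, one_smul] at this
    linarith
  refine ⟨2 ^ k, one_le_pow₀ (by norm_num), ?_, ?_⟩
  · exact not_lt.1 (Nat.find_min hex (m := k) (by omega))
  · have := Nat.find_spec hex
    rwa [hk, pow_succ'] at this

/-- When `C` is not too large, dilating by `√2` increases its measure by a fixed factor. For
`x ∈ C` and `y` in the shell `5t • C \ t • C`, which has mass bounded below, one of the rotations
of `x` towards `y` or `-y` by the angle `arcsin (1/t)` leaves `C`, in 24 small steps. -/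
lemma gain_small (hb : 0 < μ.real C) (hq : 0.1 ≤ μ.real Cᶜ) :
    μ.real C / 625 ≤ μ.real (√2 • C) - μ.real C := by
  obtain ⟨t, ht1, htq, ht2⟩ := exists_scale hrot hCm hC hCs hb hq
  have ht0 : 0 < t := by linarith
  have hlt : √2 ≤ 1.5 := Real.sqrt_le_iff.2 ⟨by norm_num, by norm_num⟩
  have hf := fernique_step hrot hCm hC hCs (a := 2 * t) (r := 2 * t) (b := 5 * t) (by positivity)
    (by positivity) (by nlinarith)
  have h1 : μ.real ((2 * t) • C) = 1 - μ.real ((2 * t) • C)ᶜ := by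
    rw [probReal_compl_eq_one_sub (hCm.const_smul₀ _)]; ring
  have hQ0 : 0 ≤ μ.real ((2 * t) • C)ᶜ := measureReal_nonneg
  have hQ5 : 0 ≤ μ.real ((5 * t) • C)ᶜ := measureReal_nonneg
  have h5 : μ.real ((5 * t) • C)ᶜ ≤ 0.02 := by
    rw [h1] at hf
    nlinarith
  set φ := arcsin (1 / t) with hφ
  have ht1' : 1 / t ≤ 1 := (div_le_one ht0).2 ht1
  have hsin : sin φ = 1 / t := Real.sin_arcsin (by linarith [one_div_pos.2 ht0]) ht1'
  have hφ0 : 0 ≤ φ := Real.arcsin_nonneg.2 (by positivity)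
  have hφt : φ * t ≤ π / 2 := by
    have := Real.mul_le_sin hφ0 (Real.arcsin_le_pi_div_two _)
    rw [hsin, div_mul_eq_mul_div, div_le_div_iff₀ Real.pi_pos ht0] at this
    linarith
  have hstep : |φ / 24| * (1 + 5 * t) ≤ 0.41 := by
    rw [abs_of_nonneg (by positivity)]
    have := Real.pi_lt_d2
    norm_num at this ⊢
    nlinarith
  have hp := crossing_prob hrot hCm hC hCs (φ / 24) 24 (β := 5 * t) (by positivity) hstep
    (U := {q | q.1 ∈ C ∧ q.2 ∈ (5 * t) • C ∧ cos φ • q.1 + sin φ • q.2 ∉ C}) (by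
      rintro q ⟨h1, h2, h3⟩
      refine ⟨h1, h2, ?_⟩
      rwa [show ((24 : ℕ) : ℝ) * (φ / 24) = φ by push_cast; ring])
  have hm := crossing_prob hrot hCm hC hCs (-(φ / 24)) 24 (β := 5 * t) (by positivity)
    (by rwa [abs_neg])
    (U := {q | q.1 ∈ C ∧ q.2 ∈ (5 * t) • C ∧ cos φ • q.1 - sin φ • q.2 ∉ C}) (by
      rintro q ⟨h1, h2, h3⟩
      refine ⟨h1, h2, ?_⟩
      rwa [show ((24 : ℕ) : ℝ) * -(φ / 24) = -φ by push_cast; ring, cos_neg, sin_neg, neg_smul,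
        ← sub_eq_add_neg])
  have hU := annulus_prob (μ := μ) hCm hC hCs ht0.le (show t ≤ 5 * t by linarith)
  have hsub : (μ.prod μ).real (C ×ˢ ((5 * t) • C \ t • C)) ≤
      (μ.prod μ).real {q | q.1 ∈ C ∧ q.2 ∈ (5 * t) • C ∧ cos φ • q.1 + sin φ • q.2 ∉ C} +
      (μ.prod μ).real {q | q.1 ∈ C ∧ q.2 ∈ (5 * t) • C ∧ cos φ • q.1 - sin φ • q.2 ∉ C} := by
    refine (measureReal_mono ?_ (measure_ne_top _ _)).trans (measureReal_union_le _ _)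
    rintro ⟨x, y⟩ ⟨hx, hy, hyt⟩
    by_cases hz : cos φ • x + sin φ • y ∈ C
    · right
      refine ⟨hx, hy, fun hz' => hyt ?_⟩
      have e : y = (t / 2) • (cos φ • x + sin φ • y) + (-(t / 2)) • (cos φ • x - sin φ • y) := by
        have h : t * sin φ = 1 := by rw [hsin]; field_simp
        calc y = (t * sin φ) • y := by rw [h, one_smul]
          _ = _ := by module
      show y ∈ t • C
      rw [e]
      exact lin_mem_smul hC hCs zero_le_one zero_le_one (by simpa using hz) (by simpa using hz')
        (by rw [abs_neg, abs_of_nonneg (by positivity)]; linarith)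
    · left
      exact ⟨hx, hy, hz⟩
  rw [hU] at hsub
  push_cast at hp hm
  have : μ.real C * 0.08 ≤ μ.real C * (μ.real (t • C)ᶜ - μ.real ((5 * t) • C)ᶜ) := by
    gcongr; norm_num at htq h5 ⊢; linarith
  norm_num at this hp hm ⊢
  linarith

/-- When `C` is large, dilating by `√2` decreases the mass of the complement by a fixed factor.
The path is a quarter turn from `x ∈ C` to `y ∈ (1 + √2) • C \ √2 • C`, in 14 steps. -/
lemma gain_large (hq : μ.real Cᶜ < 0.1) :
    μ.real Cᶜ / 50 ≤ μ.real (√2 • C) - μ.real C := by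
  have hle : 1.4 ≤ √2 := Real.le_sqrt_of_sq_le (by norm_num)
  have hlt : √2 ≤ 1.42 := Real.sqrt_le_iff.2 ⟨by norm_num, by norm_num⟩
  have hf := fernique_step hrot hCm hC hCs (a := 1) (r := 1) (b := 1 + √2) zero_le_one zero_le_one
    (by simp)
  rw [one_smul] at hf
  have hb : μ.real C = 1 - μ.real Cᶜ := by rw [probReal_compl_eq_one_sub hCm]; ring
  have ha : μ.real (√2 • C) = 1 - μ.real (√2 • C)ᶜ := by
    rw [probReal_compl_eq_one_sub (hCm.const_smul₀ _)]; ring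
  have hU := annulus_prob (μ := μ) hCm hC hCs (show 0 ≤ √2 by positivity)
    (show √2 ≤ 1 + √2 by linarith)
  have hstep : |π / 28| * (1 + (1 + √2)) ≤ 0.41 := by
    rw [abs_of_nonneg (by positivity)]
    have := Real.pi_lt_d2
    norm_num at this hlt ⊢
    nlinarith [Real.pi_pos]
  have hp := crossing_prob hrot hCm hC hCs (π / 28) 14 (β := 1 + √2) (by positivity) hstep
    (U := C ×ˢ ((1 + √2) • C \ √2 • C)) (by
      rintro q ⟨h1, h2, h3⟩
      refine ⟨h1, h2, fun h => h3 (smul_mono hC hCs zero_le_one (by norm_num at hle; linarith) ?_)⟩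
      rw [show ((14 : ℕ) : ℝ) * (π / 28) = π / 2 by push_cast; ring, cos_pi_div_two,
        sin_pi_div_two, zero_smul, one_smul, zero_add] at h
      rwa [one_smul])
  rw [hU] at hp
  push_cast at hp
  have h0 : 0 ≤ μ.real Cᶜ := measureReal_nonneg
  have h1 : 0 ≤ μ.real (√2 • C)ᶜ := measureReal_nonneg
  rw [ha]
  rw [ha, mul_sub] at hp
  -- if the complement did not already shrink by half, the shell beyond `√2 • C` has large mass
  by_cases h : μ.real (√2 • C)ᶜ ≤ μ.real Cᶜ / 2
  · linarith
  · push Not at h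
    norm_num at hq
    nlinarith

/-- Three iterations of Fernique's estimate, along the radii `1 → 2.42 → 4.45 → 44`. -/
lemma tail_large {δ : ℝ} (hδ : δ ≤ 0.1) (hq : μ.real Cᶜ ≤ δ) :
    μ.real ((44 : ℝ) • C)ᶜ ≤ δ / 10 ^ 6 := by
  have hlt : √2 ≤ 1.4143 := Real.sqrt_le_iff.2 ⟨by norm_num, by norm_num⟩
  have hb : 0.9 ≤ μ.real C := by
    have : μ.real C = 1 - μ.real Cᶜ := by rw [probReal_compl_eq_one_sub hCm]; ring
    norm_num at hδ ⊢; linarith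
  have h0 : 0 ≤ μ.real Cᶜ := measureReal_nonneg
  have hδ0 : 0 ≤ δ := h0.trans hq
  have step : ∀ r s : ℝ, 0 ≤ r → 1 + 1.4143 * r ≤ s →
      μ.real (s • C)ᶜ * 0.9 ≤ μ.real (r • C)ᶜ ^ 2 := by
    intro r s hr hs
    have := fernique_step hrot hCm hC hCs (a := 1) (r := r) (b := s) zero_le_one hr (by nlinarith)
    rw [one_smul] at this
    have h0 : 0 ≤ μ.real (s • C)ᶜ := measureReal_nonneg
    nlinarith
  have s1 := step 1 2.42 (by norm_num) (by norm_num)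
  have s2 := step 2.42 4.45 (by norm_num) (by norm_num)
  have s3 := step 4.45 44 (by norm_num) (by norm_num)
  rw [one_smul] at s1
  have n1 : 0 ≤ μ.real ((2.42 : ℝ) • C)ᶜ := measureReal_nonneg
  have n2 : 0 ≤ μ.real ((4.45 : ℝ) • C)ᶜ := measureReal_nonneg
  generalize μ.real ((2.42 : ℝ) • C)ᶜ = u at *
  generalize μ.real ((4.45 : ℝ) • C)ᶜ = v at *
  generalize μ.real ((44 : ℝ) • C)ᶜ = w at *
  norm_num at hδ s1 s2 s3 ⊢
  have b1 : u ≤ δ / 9 := by nlinarith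
  have b2 : v ≤ δ / 720 := by nlinarith
  nlinarith

/-- The domination of `μ ∗ μ` by the remainder measure, tested on `√2 • C`: here `μ.real C` is
the `μ ∗ μ`-measure of `√2 • C`, and `μ - c • μ.restrict (64 • K)` is the remainder of mass `δ`.
For small `C` the remainder is at least `(δ - p) • μ` with `p = μ((64 • K)ᶜ)`; for large `C` the
estimate is made on complements. -/
lemma remainder_bound {K : Set E} (hKm : MeasurableSet K) (hK : Convex ℝ K)
    (hKs : ∀ x ∈ K, -x ∈ K) {δ c : ℝ} (hδ0 : 0 < δ) (hδ1 : δ ≤ 0.1) (hKμ : 1 - δ < μ.real K)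
    (hc : c * μ.real ((64 : ℝ) • K) = 1 - δ) :
    δ * μ.real C ≤ μ.real (√2 • C) - c * μ.real (√2 • C ∩ (64 : ℝ) • K) := by
  have hm2 : MeasurableSet (√2 • C) := hCm.const_smul₀ _
  have hm64 : MeasurableSet ((64 : ℝ) • K) := hKm.const_smul₀ _
  have hKc : μ.real Kᶜ ≤ δ := by rw [probReal_compl_eq_one_sub hKm]; linarith
  have h44 := tail_large hrot hKm hK hKs hδ1 hKc
  have h64 : μ.real ((64 : ℝ) • K)ᶜ ≤ δ / 10 ^ 6 :=
    (compl_smul_anti hK hKs (by norm_num) (by norm_num)).trans h44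
  have h440 : 0 ≤ μ.real ((44 : ℝ) • K)ᶜ := measureReal_nonneg
  have h640 : 0 ≤ μ.real ((64 : ℝ) • K)ᶜ := measureReal_nonneg
  have e64 : μ.real ((64 : ℝ) • K) = 1 - μ.real ((64 : ℝ) • K)ᶜ := by
    rw [probReal_compl_eq_one_sub hm64]; ring
  rw [e64] at hc
  have hb : μ.real C = 1 - μ.real Cᶜ := by rw [probReal_compl_eq_one_sub hCm]; ring
  have ha : μ.real (√2 • C) = 1 - μ.real (√2 • C)ᶜ := by
    rw [probReal_compl_eq_one_sub hm2]; ring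
  have hb0 : 0 ≤ μ.real C := measureReal_nonneg
  have hq0 : 0 ≤ μ.real Cᶜ := measureReal_nonneg
  have ha0 : 0 ≤ μ.real (√2 • C) := measureReal_nonneg
  have hcq0 : 0 ≤ μ.real (√2 • C)ᶜ := measureReal_nonneg
  norm_num at hδ1
  -- `1 - δ ≤ c ≤ 1 - (δ - p)` where `p` is the mass outside `64 • K`
  have hc0 : 0 < c := by
    by_contra h
    push Not at h
    nlinarith
  have hc1 : 1 - δ ≤ c := by nlinarith
  have hc2 : c ≤ 1 - (δ - μ.real ((64 : ℝ) • K)ᶜ) := by nlinarith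
  by_cases hq : 0.1 ≤ μ.real Cᶜ
  · have hle : μ.real (√2 • C ∩ (64 : ℝ) • K) ≤ μ.real (√2 • C) :=
      measureReal_mono Set.inter_subset_left
    rcases hb0.eq_or_lt with h | h
    · rw [← h]; nlinarith
    have hg := gain_small hrot hCm hC hCs h hq
    have : (δ - μ.real ((64 : ℝ) • K)ᶜ) * μ.real (√2 • C) ≤
        μ.real (√2 • C) - c * μ.real (√2 • C ∩ (64 : ℝ) • K) := by nlinarith
    refine le_trans ?_ this
    have h2 : (δ * (1 - 1 / 10 ^ 6)) * (μ.real C * (1 + 1 / 625)) ≤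
        (δ - μ.real ((64 : ℝ) • K)ᶜ) * μ.real (√2 • C) := by
      gcongr
      · linarith
      · linarith
      · linarith
    nlinarith
  · push Not at hq
    have hg := gain_large hrot hCm hC hCs hq
    have hd := decoupling hrot hCm hC hCs hKm hK hKs
    set D := μ.real ((√2 • C)ᶜ ∩ ((64 : ℝ) • K)ᶜ) with hD
    have hD0 : 0 ≤ D := measureReal_nonneg
    have hI : μ.real (√2 • C ∩ (64 : ℝ) • K) =
        1 - μ.real (√2 • C)ᶜ - μ.real ((64 : ℝ) • K)ᶜ + D := by
      have h1 := measureReal_union_add_inter (μ := μ) (s := (√2 • C)ᶜ) hm64.compl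
      rw [← Set.compl_inter, probReal_compl_eq_one_sub (hm2.inter hm64)] at h1
      linarith
    have hDle : D ≤ (δ / 10 ^ 5) * μ.real Cᶜ := by
      have : D * 0.9 ≤ D * μ.real K := by
        gcongr; norm_num; linarith
      have h3 : 2 * (μ.real Cᶜ * μ.real ((44 : ℝ) • K)ᶜ) ≤ 2 * (μ.real Cᶜ * (δ / 10 ^ 6)) := by
        gcongr
      norm_num at this h3 ⊢
      nlinarith
    have hfin : (1 - c) * μ.real (√2 • C)ᶜ + c * D ≤ δ * μ.real Cᶜ := by
      have h1 : (1 - c) * μ.real (√2 • C)ᶜ ≤ δ * μ.real (√2 • C)ᶜ := by gcongr; linarith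
      have h2 : c * D ≤ 1 * D := by gcongr; linarith
      have h3 : δ * (μ.real (√2 • C)ᶜ) ≤ δ * (μ.real Cᶜ - μ.real Cᶜ / 50) := by
        gcongr; linarith
      nlinarith [mul_nonneg hδ0.le hq0]
    rw [hI, ha, hb]
    nlinarith
end

/-! ### The decomposition -/

/-- Lemma 3.1 of Sellke; mixture decomposition of a Gaussian measure
relative to a high-probability symmetric convex set `K`. -/
theorem statement8 (n : ℕ) (μ : Measure (EuclideanSpace ℝ (Fin n)))
    (hμ : IsCenteredGaussian μ)
    (δ : ℝ) (hδ0 : 0 < δ) (hδ1 : δ ≤ 0.1)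
    (K : Set (EuclideanSpace ℝ (Fin n))) (hKm : MeasurableSet K) (hKc : Convex ℝ K)
    (hKs : ∀ x ∈ K, -x ∈ K)
    (hKμ : ENNReal.ofReal (1 - δ) < μ K) :
    ∃ δ' : ℝ, 0 ≤ δ' ∧ δ' ≤ δ ∧
      ∃ ν νbar : Measure (EuclideanSpace ℝ (Fin n)),
        IsProbabilityMeasure ν ∧ IsProbabilityMeasure νbar ∧
        μ = ENNReal.ofReal (1 - δ') • ν + ENNReal.ofReal δ' • νbar ∧
        ν ((64 : ℝ) • K) = 1 ∧
        stochDom ν μ ∧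
        stochDom νbar ((μ.prod μ).map (fun p => p.1 + p.2)) := by
  obtain ⟨hP, hL⟩ := hμ
  have hG : IsGaussian μ := isGaussian_of_map_eq_gaussianReal fun L => ⟨0, hL L⟩
  have h0 : μ[id] = 0 := by
    refine SeparatingDual.eq_zero_of_forall_dual_eq_zero (R := ℝ) fun L => ?_
    obtain ⟨v, hv⟩ := hL L
    have h1 := IsGaussian.integral_dual (μ := μ) L
    have h2 : ∫ x, x ∂(μ.map L) = μ[L] := integral_map (by fun_prop) (by fun_prop)
    rw [hv, integral_id_gaussianReal] at h2
    simp only [id_eq]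
    rw [← h1, ← h2]
  have hrot := IsGaussian.map_rotation_eq_self h0
  have hKr : 1 - δ < μ.real K := (ENNReal.ofReal_lt_iff_lt_toReal
    (by norm_num at hδ1; linarith) (measure_ne_top _ _)).1 hKμ
  norm_num at hδ1
  have hm64 : MeasurableSet ((64 : ℝ) • K) := hKm.const_smul₀ _
  have hK64 : K ⊆ (64 : ℝ) • K := by
    simpa using smul_mono hKc hKs zero_le_one (by norm_num : (1 : ℝ) ≤ 64)
  set s := μ.real ((64 : ℝ) • K) with hs
  have hsK : μ.real K ≤ s := measureReal_mono hK64
  have hs0 : 0 < s := by linarith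
  have hs1 : s ≤ 1 := measureReal_le_one
  set c := (1 - δ) / s with hc
  have hcs : c * s = 1 - δ := by rw [hc]; field_simp
  have hc0 : 0 ≤ c := div_nonneg (by linarith) hs0.le
  have hc1 : c ≤ 1 := (div_le_one hs0).2 (by linarith)
  have hδs : 0 ≤ 1 - δ := by linarith
  -- `ν` is `μ` conditioned on `64 • K`, and `δ • ν̄` is what is left of `μ`
  set μi := μ.restrict ((64 : ℝ) • K) with hμi
  set μo := μ.restrict ((64 : ℝ) • K)ᶜ with hμo
  have hsplit : μi + μo = μ := Measure.restrict_add_restrict_compl hm64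
  set ν := ENNReal.ofReal s⁻¹ • μi with hν
  set νbar := ENNReal.ofReal δ⁻¹ • (ENNReal.ofReal (1 - c) • μi + μo) with hνb
  have hνr : ∀ A, MeasurableSet A → ν.real A = s⁻¹ * μ.real (A ∩ (64 : ℝ) • K) := by
    intro A hA
    rw [hν, measureReal_ennreal_smul_apply, ENNReal.toReal_ofReal (by positivity), hμi,
      measureReal_restrict_apply hA]
  have hif : IsFiniteMeasure (ENNReal.ofReal (1 - c) • μi) :=
    Measure.smul_finite _ ENNReal.ofReal_ne_top
  have hνbr : ∀ A, MeasurableSet A →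
      νbar.real A = δ⁻¹ * (μ.real A - c * μ.real (A ∩ (64 : ℝ) • K)) := by
    intro A hA
    have h : μ.real (A ∩ (64 : ℝ) • K) + μ.real (A ∩ ((64 : ℝ) • K)ᶜ) = μ.real A := by
      rw [← Set.sdiff_eq]; exact measureReal_inter_add_sdiff hm64
    rw [hνb, measureReal_ennreal_smul_apply, ENNReal.toReal_ofReal (by positivity),
      measureReal_add_apply (measure_ne_top _ _) (measure_ne_top _ _), measureReal_ennreal_smul_apply,
      ENNReal.toReal_ofReal (by linarith), hμi, hμo, measureReal_restrict_apply hA,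
      measureReal_restrict_apply hA, ← h]
    ring
  have hνf : IsFiniteMeasure ν := by
    rw [hν]; exact Measure.smul_finite _ ENNReal.ofReal_ne_top
  have hνbf : IsFiniteMeasure νbar := by
    rw [hνb]
    exact Measure.smul_finite _ ENNReal.ofReal_ne_top
  have hprob : ∀ ρ : Measure (EuclideanSpace ℝ (Fin n)), ∀ A, ρ.real A = 1 → ρ A = 1 := by
    intro ρ A h
    rw [measureReal_def] at h
    exact (ENNReal.toReal_eq_one_iff _).1 h
  refine ⟨δ, hδ0.le, le_rfl, ν, νbar, ⟨hprob _ _ ?_⟩, ⟨hprob _ _ ?_⟩, ?_, hprob _ _ ?_, ?_, ?_⟩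
  · rw [hνr _ MeasurableSet.univ, Set.univ_inter, ← hs, inv_mul_cancel₀ hs0.ne']
  · rw [hνbr _ MeasurableSet.univ, Set.univ_inter, ← hs, hcs, probReal_univ]
    field_simp; ring
  · rw [hν, hνb, smul_smul, smul_smul, ← ENNReal.ofReal_mul hδs, ← ENNReal.ofReal_mul hδ0.le,
      mul_inv_cancel₀ hδ0.ne', ENNReal.ofReal_one, one_smul, ← add_assoc, ← add_smul,
      ← div_eq_mul_inv, ← hc, ← ENNReal.ofReal_add hc0 (by linarith), add_sub_cancel,
      ENNReal.ofReal_one, one_smul, hsplit]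
  · rw [hνr _ hm64, Set.inter_self, ← hs, inv_mul_cancel₀ hs0.ne']
  · intro A hA hAc hAs
    rw [← ENNReal.toReal_le_toReal (measure_ne_top _ _) (measure_ne_top _ _)]
    change μ.real A ≤ ν.real A
    rw [hνr A hA, le_inv_mul_iff₀ hs0, mul_comm]
    refine gci μ h0 hA hAc hAs hm64 (hKc.smul _) ?_
    rintro _ ⟨z, hz, rfl⟩
    exact ⟨-z, hKs z hz, by simp⟩
  · intro A hA hAc hAs
    have h2 : √2 ≠ 0 := by positivity
    have h22 : √2 * √2 = 2 := Real.mul_self_sqrt (by norm_num)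
    set C := (√2)⁻¹ • A with hC
    have hCA : √2 • C = A := by rw [hC, smul_smul, mul_inv_cancel₀ h2, one_smul]
    have hCm : MeasurableSet C := hA.const_smul₀ _
    have hCs : ∀ x ∈ C, -x ∈ C := by
      rintro _ ⟨z, hz, rfl⟩
      exact ⟨-z, hAs z hz, by simp⟩
    have hb := remainder_bound hrot hCm (hAc.smul _) hCs hKm hKc hKs hδ0
      (by norm_num; exact hδ1) hKr hcs
    rw [hCA] at hb
    -- `(x + y) / √2` has law `μ`
    have hconv : (μ.prod μ) ((fun p => p.1 + p.2) ⁻¹' A) = μ C := by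
      have := rot_prob1 hrot (π / 4) hCm
      rw [measureReal_def, measureReal_def, ENNReal.toReal_eq_toReal_iff' (measure_ne_top _ _)
        (measure_ne_top _ _)] at this
      rw [← this]
      congr 1
      ext ⟨x, y⟩
      simp only [Set.mem_preimage, Set.mem_ofPred_eq, cos_pi_div_four, sin_pi_div_four]
      rw [← smul_add, hC, Set.mem_inv_smul_set_iff₀ h2, smul_smul,
        show √2 * (√2 / 2) = 1 by linarith, one_smul]
    rw [Measure.map_apply (by fun_prop) hA, hconv,
      ← ENNReal.toReal_le_toReal (measure_ne_top _ _) (measure_ne_top _ _)]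
    change μ.real C ≤ νbar.real A
    rw [hνbr A hA, le_inv_mul_iff₀ hδ0]
    exact hb
end
end

section
/- Let d ≥ 1, t ≥ 1 an integer, T = 2^t, and let x : [0,T] → ℝ^d be Bochner integrable. With σ_j = ∫_j^{j+1} x_s ds and s̄_j^l = (1/l)(∫_{j+l/2}^{j+l} x_s ds − ∫_j^{j+l/2} x_s ds), the following dyadic decomposition identity holds: σ_{T−1} − σ_0 = Σ_{j=1}^{t} s̄_0^{2^j} + Σ_{l=1}^{t} s̄_{T−2^l}^{2^l} (note that the l = t term of the second sum equals s̄_0^{T}, so this term appears twice in total). -/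
/-!
Write `a n` for the mean of `x` over `[0, 2 ^ n]` and `b n` for its mean over
`[T - 2 ^ n, T]`, where `T = 2 ^ t`. Splitting an interval of length `2 ^ (n + 1)` at its midpoint
shows that `sbar x 0 (2 ^ (n + 1)) = a (n + 1) - a n` and
`sbar x (T - 2 ^ (n + 1)) (2 ^ (n + 1)) = b n - b (n + 1)`. Both sums therefore telescope, to
`a t - a 0` and `b 0 - b t`. Since `a t = b t` is the mean over the whole interval `[0, T]`,
while `a 0 = σ_0` and `b 0 = σ_{T-1}`, adding them gives the identity.
-/

open MeasureTheory Real

noncomputable section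

/-- `σ_j = ∫_j^{j+1} x_s ds`. -/
def sigmaInt {d : ℕ} (x : ℝ → EuclideanSpace ℝ (Fin d)) (j : ℝ) :
    EuclideanSpace ℝ (Fin d) :=
  ∫ s in Set.Icc j (j + 1), x s

/-- `s̄_j^l = (1/l)(∫_{j+l/2}^{j+l} x_s ds - ∫_j^{j+l/2} x_s ds)`. -/
def sbar {d : ℕ} (x : ℝ → EuclideanSpace ℝ (Fin d)) (j l : ℝ) :
    EuclideanSpace ℝ (Fin d) :=
  (1 / l) • ((∫ s in Set.Icc (j + l / 2) (j + l), x s) - ∫ s in Set.Icc j (j + l / 2), x s)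

/-- Additivity over adjacent closed intervals; the common endpoint is a null set. -/
lemma setIntegral_Icc_add_adjacent {d : ℕ} {x : ℝ → EuclideanSpace ℝ (Fin d)} {a b c : ℝ}
    (hab : a ≤ b) (hbc : b ≤ c) (hx : IntegrableOn x (Set.Icc a c)) :
    (∫ s in Set.Icc a b, x s) + ∫ s in Set.Icc b c, x s = ∫ s in Set.Icc a c, x s := by
  simp only [integral_Icc_eq_integral_Ioc]
  rw [← Set.Ioc_union_Ioc_eq_Ioc hab hbc]
  refine (setIntegral_union (Set.Ioc_disjoint_Ioc_of_le le_rfl) measurableSet_Ioc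
    (hx.mono_set ?_) (hx.mono_set ?_)).symm
  · exact Set.Ioc_subset_Icc_self.trans (Set.Icc_subset_Icc_right hbc)
  · exact Set.Ioc_subset_Icc_self.trans (Set.Icc_subset_Icc_left hab)

/-- The forward sum telescopes to a difference of means over initial intervals. -/
lemma sum_sbar_zero {d : ℕ} {x : ℝ → EuclideanSpace ℝ (Fin d)} (n : ℕ)
    (hx : IntegrableOn x (Set.Icc 0 ((2 : ℝ) ^ n))) :
    ∑ j ∈ Finset.Icc 1 n, sbar x 0 ((2 : ℝ) ^ j)
      = (1 / (2 : ℝ) ^ n) • (∫ s in Set.Icc 0 ((2 : ℝ) ^ n), x s) - sigmaInt x 0 := by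
  induction n with
  | zero => simp [sigmaInt]
  | succ n ih =>
    have hp : (0 : ℝ) < 2 ^ n := by positivity
    have hle : (2 : ℝ) ^ n ≤ 2 ^ (n + 1) := by rw [pow_succ]; linarith
    have hhalf : (0 : ℝ) + 2 ^ (n + 1) / 2 = 2 ^ n := by ring
    rw [Finset.sum_Icc_succ_top (by lia), ih (hx.mono_set (Set.Icc_subset_Icc_right hle)),
      sbar, hhalf, zero_add, ← setIntegral_Icc_add_adjacent hp.le hle hx, pow_succ]
    match_scalars <;> field_simp <;> ring

/-- The backward sum telescopes to a difference of means over final intervals of `[0, T]`. -/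
lemma sum_sbar_sub {d : ℕ} {x : ℝ → EuclideanSpace ℝ (Fin d)} (T : ℝ) (n : ℕ)
    (hx : IntegrableOn x (Set.Icc (T - (2 : ℝ) ^ n) T)) :
    ∑ l ∈ Finset.Icc 1 n, sbar x (T - (2 : ℝ) ^ l) ((2 : ℝ) ^ l)
      = sigmaInt x (T - 1)
        - (1 / (2 : ℝ) ^ n) • (∫ s in Set.Icc (T - (2 : ℝ) ^ n) T, x s) := by
  induction n with
  | zero => simp [sigmaInt]
  | succ n ih =>
    have hp : (0 : ℝ) < 2 ^ n := by positivity
    have hle : T - (2 : ℝ) ^ (n + 1) ≤ T - 2 ^ n := by rw [pow_succ]; linarith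
    have hhalf : T - (2 : ℝ) ^ (n + 1) + 2 ^ (n + 1) / 2 = T - 2 ^ n := by ring
    rw [Finset.sum_Icc_succ_top (by lia), ih (hx.mono_set (Set.Icc_subset_Icc_left hle)),
      sbar, hhalf, sub_add_cancel,
      ← setIntegral_Icc_add_adjacent hle (by linarith) hx, pow_succ]
    match_scalars <;> field_simp <;> ring

/-- dyadic decomposition identity `(2.1)`:
`σ_{T-1} - σ_0 = Σ_{j=1}^t s̄_0^{2^j} + Σ_{l=1}^t s̄_{T-2^l}^{2^l}` for `T = 2^t`. -/
theorem statement10 (d t : ℕ) (hd : 1 ≤ d) (ht : 1 ≤ t)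
    (x : ℝ → EuclideanSpace ℝ (Fin d))
    (hx : IntegrableOn x (Set.Icc 0 ((2:ℝ) ^ t))) :
    sigmaInt x ((2:ℝ) ^ t - 1) - sigmaInt x 0
      = (∑ j ∈ Finset.Icc 1 t, sbar x 0 ((2:ℝ) ^ j))
        + ∑ l ∈ Finset.Icc 1 t, sbar x ((2:ℝ) ^ t - (2:ℝ) ^ l) ((2:ℝ) ^ l) := by
  rw [sum_sbar_zero t hx, sum_sbar_sub _ t (by simpa using hx), sub_self]
  abel
end
end
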